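/- arXiv:1810.08486 — 9 statements merged into one kernel-verified Lean document; each statement's English description precedes it below -/
import Mathlib

section
/- Leibniz rule for the connection ∇⁰ (Proposition A.1, first part): for every module function f, every smooth algebra element Φ, and every W ∈ {X, Y, Z}, the identity ∇⁰_W(f·Φ) = (∇⁰_W f)·Φ + f·(δ_W Φ) holds as functions on ℝ × ℝ (all sums involved are pointwise finite since f is compactly supported in the first variable and Φ is finitely supported in the ℤ-variable). -/
noncomputable section

/-- `e(t) = exp(2πit)`. -/
def e2 (t : ℝ) : ℂ := Complex.exp (2 * Real.pi * Complex.I * t)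

/-- Partial derivative in the first variable. -/
def pdX (f : ℝ × ℝ → ℂ) (x y : ℝ) : ℂ := deriv (fun t => f (t, y)) x

/-- Partial derivative in the second variable. -/
def pdY (f : ℝ × ℝ → ℂ) (x y : ℝ) : ℂ := deriv (fun t => f (x, t)) y

/-- A module function: smooth, 1-periodic in the second variable, and supported in
`K × ℝ` for some compact `K ⊆ ℝ`. -/
def IsModuleFn (f : ℝ × ℝ → ℂ) : Prop :=
  ContDiff ℝ (⊤ : ℕ∞) f ∧ (∀ x y : ℝ, f (x, y + 1) = f (x, y)) ∧
    ∃ K : Set ℝ, IsCompact K ∧ ∀ x y : ℝ, x ∉ K → f (x, y) = 0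

/-- `(∇⁰_X f)(x,y) = −∂f/∂y(x,y) + (πci/(2μ))·x²·f(x,y)`. -/
def n0X (c : ℕ) (μ : ℝ) (f : ℝ × ℝ → ℂ) : ℝ × ℝ → ℂ := fun q =>
  -pdY f q.1 q.2 + (Real.pi : ℂ) * (c : ℂ) * Complex.I / (2 * (μ : ℂ)) * (q.1 : ℂ) ^ 2 * f q

/-- `(∇⁰_Y f)(x,y) = −∂f/∂x(x,y)`. -/
def n0Y (f : ℝ × ℝ → ℂ) : ℝ × ℝ → ℂ := fun q => -pdX f q.1 q.2

/-- `(∇⁰_Z f)(x,y) = (πix/μ)·f(x,y)`. -/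
def n0Z (μ : ℝ) (f : ℝ × ℝ → ℂ) : ℝ × ℝ → ℂ := fun q =>
  (Real.pi : ℂ) * Complex.I * (q.1 : ℂ) / (μ : ℂ) * f q

/-- A smooth algebra element of `D^c_{μν}`, presented as a `ℤ`-indexed family of smooth
functions on `ℝ × ℝ`: smooth, 1-periodic in `y`, finitely supported in the `ℤ`-variable,
and `ρ`-invariant. -/
def IsAlgElem (c : ℕ) (ν : ℝ) (Φ : ℤ → ℝ × ℝ → ℂ) : Prop :=
  (∀ p : ℤ, ContDiff ℝ (⊤ : ℕ∞) (Φ p)) ∧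
  (∀ (p : ℤ) (x y : ℝ), Φ p (x, y + 1) = Φ p (x, y)) ∧
  {p : ℤ | Φ p ≠ 0}.Finite ∧
  ∀ (p k : ℤ) (x y : ℝ),
    e2 (-((c : ℝ) * (k : ℝ) * (p : ℝ) * (y - (p : ℝ) * ν))) * Φ p (x + (k : ℝ), y) = Φ p (x, y)

/-- The right action of `Φ ∈ D^c_{μν}` on the module function `f`:
`(f·Φ)(x,y) = Σ_q f(x+2qμ, y+2qν)·conj(Φ(x+2qμ, y+2qν, q))`. -/
def rAct (μ ν : ℝ) (f : ℝ × ℝ → ℂ) (Φ : ℤ → ℝ × ℝ → ℂ) : ℝ × ℝ → ℂ := fun q =>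
  ∑ᶠ p : ℤ, f (q.1 + 2 * (p : ℝ) * μ, q.2 + 2 * (p : ℝ) * ν) *
    (starRingEnd ℂ) (Φ p (q.1 + 2 * (p : ℝ) * μ, q.2 + 2 * (p : ℝ) * ν))

/-- `(δ_X Φ)(x,y,p) = 2πicp(x−pμ)·Φ(x,y,p) − ∂Φ/∂y(x,y,p)`. -/
def dAlgX (c : ℕ) (μ : ℝ) (Φ : ℤ → ℝ × ℝ → ℂ) : ℤ → ℝ × ℝ → ℂ := fun p q =>
  2 * (Real.pi : ℂ) * Complex.I * (c : ℂ) * (p : ℂ) * ((q.1 : ℂ) - (p : ℂ) * (μ : ℂ)) * Φ p q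
    - pdY (Φ p) q.1 q.2

/-- `(δ_Y Φ)(x,y,p) = −∂Φ/∂x(x,y,p)`. -/
def dAlgY (Φ : ℤ → ℝ × ℝ → ℂ) : ℤ → ℝ × ℝ → ℂ := fun p q => -pdX (Φ p) q.1 q.2

/-- `(δ_Z Φ)(x,y,p) = 2πip·Φ(x,y,p)`. -/
def dAlgZ (Φ : ℤ → ℝ × ℝ → ℂ) : ℤ → ℝ × ℝ → ℂ := fun p q =>
  2 * (Real.pi : ℂ) * Complex.I * (p : ℂ) * Φ p q

/-- The `D^c_{μν}`-valued inner product
`⟨f,g⟩(x,y,p) = Σ_k e(−ckp(y−pν))·f(x+k,y)·conj(g(x−2pμ+k, y−2pν))`. -/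
def ipD (c : ℕ) (μ ν : ℝ) (f g : ℝ × ℝ → ℂ) : ℤ → ℝ × ℝ → ℂ := fun p q =>
  ∑ᶠ k : ℤ, e2 (-((c : ℝ) * (k : ℝ) * (p : ℝ) * (q.2 - (p : ℝ) * ν))) *
    f (q.1 + (k : ℝ), q.2) *
    (starRingEnd ℂ) (g (q.1 - 2 * (p : ℝ) * μ + (k : ℝ), q.2 - 2 * (p : ℝ) * ν))

/-!
The operators `∇⁰_W` and `δ_W` all have the form `g ↦ m * g - ∂_v g`, with `v = (0, 1)`, `(1, 0)`
and `0` for `W = X`, `Y` and `Z`. The derivative parts obey the Leibniz rule because each summand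
of `f·Φ` is a product of translates of `f` and `conj (Φ p)`. The multipliers `m` of `∇⁰_W` and
`a p` of `δ_W` are compatible as soon as `m q = m (q + τ p) + conj (a p (q + τ p))`, where
`τ p = (2pμ, 2pν)`. Up to constants this is `x² = (x + 2pμ)² - 4pμ((x + 2pμ) - pμ)` for `W = X` and
`x = (x + 2pμ) - 2pμ` for `W = Z`.
-/

section TranslateSum

variable {ι E : Type*}

/-- The sum `∑ i, f (q + τ i) * conj (Φ i (q + τ i))` over translates, of which `rAct` is the case
`τ p = (2pμ, 2pν)`. As a `finsum` it is `0` wherever infinitely many summands are nonzero. -/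
def translateSum [Add E] (τ : ι → E) (f : E → ℂ) (Φ : ι → E → ℂ) : E → ℂ := fun q =>
  ∑ᶠ i, f (q + τ i) * (starRingEnd ℂ) (Φ i (q + τ i))

theorem translateSum_eq_sum [Add E] (τ : ι → E) (f : E → ℂ) {Φ : ι → E → ℂ} {S : Finset ι}
    (hS : Function.support Φ ⊆ S) :
    translateSum τ f Φ = fun q => ∑ i ∈ S, f (q + τ i) * (starRingEnd ℂ) (Φ i (q + τ i)) := by
  funext q
  refine finsum_eq_sum_of_support_subset _ fun i hi => hS fun hΦi => hi ?_
  simp [hΦi]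

variable [AddCommGroup E] [Module ℝ E]

/-- The first-order operator `g ↦ m * g - ∂_v g`, the common shape of the connection components
`∇⁰_W` and of the derivations `δ_W` at a fixed `p`. It uses `lineDeriv`, so that `pdX` and `pdY` are
directional derivatives of arbitrary functions and `v = 0` gives the multiplication operator. -/
def firstOrderOp (v : E) (m g : E → ℂ) : E → ℂ := fun q => m q * g q - lineDeriv ℝ g q v

theorem firstOrderOp_zero (v : E) (m : E → ℂ) : firstOrderOp v m 0 = 0 := by
  funext q
  simp [firstOrderOp, lineDeriv]

theorem hasLineDerivAt_translate_mul_conj {f g : E → ℂ} {f' g' : ℂ} {q v w : E}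
    (hf : HasLineDerivAt ℝ f f' (q + w) v) (hg : HasLineDerivAt ℝ g g' (q + w) v) :
    HasLineDerivAt ℝ (fun r => f (r + w) * (starRingEnd ℂ) (g (r + w)))
      (f' * (starRingEnd ℂ) (g (q + w)) + f (q + w) * (starRingEnd ℂ) g') q v := by
  have hmul := HasDerivAt.fun_mul hf (HasDerivAt.star hg)
  simpa only [HasLineDerivAt, starRingEnd_apply, add_right_comm q _ w, zero_smul, add_zero]
    using hmul

variable {τ : ι → E} {f : E → ℂ} {Φ : ι → E → ℂ} {v : E}

theorem lineDeriv_translateSum {S : Finset ι} (hS : Function.support Φ ⊆ S)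
    (hf : ∀ q, LineDifferentiableAt ℝ f q v) (hΦ : ∀ i q, LineDifferentiableAt ℝ (Φ i) q v)
    (q : E) :
    lineDeriv ℝ (translateSum τ f Φ) q v =
      ∑ i ∈ S, (lineDeriv ℝ f (q + τ i) v * (starRingEnd ℂ) (Φ i (q + τ i)) +
        f (q + τ i) * (starRingEnd ℂ) (lineDeriv ℝ (Φ i) (q + τ i) v)) := by
  rw [translateSum_eq_sum τ f hS]
  exact HasLineDerivAt.lineDeriv <| HasDerivAt.fun_sum fun i _ =>
    hasLineDerivAt_translate_mul_conj (hf _).hasLineDerivAt (hΦ i _).hasLineDerivAt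

theorem firstOrderOp_translateSum (hfin : (Function.support Φ).Finite)
    (hf : ∀ q, LineDifferentiableAt ℝ f q v) (hΦ : ∀ i q, LineDifferentiableAt ℝ (Φ i) q v)
    {m : E → ℂ} {a : ι → E → ℂ}
    (hma : ∀ i q, m q = m (q + τ i) + (starRingEnd ℂ) (a i (q + τ i))) :
    firstOrderOp v m (translateSum τ f Φ) =
      translateSum τ (firstOrderOp v m f) Φ +
        translateSum τ f (fun i => firstOrderOp v (a i) (Φ i)) := by
  have hS : Function.support Φ ⊆ hfin.toFinset := hfin.coe_toFinset.ge
  have hS_op : Function.support (fun i => firstOrderOp v (a i) (Φ i)) ⊆ hfin.toFinset :=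
    fun i hi => hS fun hΦi => hi (by simp only [hΦi, firstOrderOp_zero])
  funext q
  rw [firstOrderOp, lineDeriv_translateSum hS hf hΦ, Pi.add_apply, translateSum_eq_sum τ f hS,
    translateSum_eq_sum τ _ hS, translateSum_eq_sum τ f hS_op, Finset.mul_sum,
    ← Finset.sum_sub_distrib, ← Finset.sum_add_distrib]
  refine Finset.sum_congr rfl fun i _ => ?_
  simp only [firstOrderOp, map_sub, map_mul]
  rw [hma i q]
  ring

end TranslateSum

theorem rAct_eq_translateSum (μ ν : ℝ) (f : ℝ × ℝ → ℂ) (Φ : ℤ → ℝ × ℝ → ℂ) :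
    rAct μ ν f Φ = translateSum (fun p : ℤ => (2 * (p : ℝ) * μ, 2 * (p : ℝ) * ν)) f Φ :=
  rfl

theorem pdX_eq_lineDeriv (f : ℝ × ℝ → ℂ) (q : ℝ × ℝ) :
    pdX f q.1 q.2 = lineDeriv ℝ f q (1, 0) := by
  simpa [pdX, lineDeriv, Prod.add_def] using
    (deriv_comp_const_add (f := fun t => f (t, q.2)) q.1 0).symm

theorem pdY_eq_lineDeriv (f : ℝ × ℝ → ℂ) (q : ℝ × ℝ) :
    pdY f q.1 q.2 = lineDeriv ℝ f q (0, 1) := by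
  simpa [pdY, lineDeriv, Prod.add_def] using
    (deriv_comp_const_add (f := fun t => f (q.1, t)) q.2 0).symm

theorem n0X_eq_firstOrderOp (c : ℕ) (μ : ℝ) (f : ℝ × ℝ → ℂ) :
    n0X c μ f = firstOrderOp ((0, 1) : ℝ × ℝ)
      (fun q => (Real.pi : ℂ) * c * Complex.I / (2 * μ) * (q.1 : ℂ) ^ 2) f := by
  funext q
  rw [n0X, firstOrderOp, pdY_eq_lineDeriv]
  ring

theorem dAlgX_eq_firstOrderOp (c : ℕ) (μ : ℝ) (Φ : ℤ → ℝ × ℝ → ℂ) :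
    dAlgX c μ Φ = fun p : ℤ => firstOrderOp ((0, 1) : ℝ × ℝ)
      (fun q => 2 * (Real.pi : ℂ) * Complex.I * c * p * (q.1 - p * μ)) (Φ p) := by
  funext p q
  rw [dAlgX, firstOrderOp, pdY_eq_lineDeriv]

theorem n0Y_eq_firstOrderOp (f : ℝ × ℝ → ℂ) : n0Y f = firstOrderOp (1, 0) 0 f := by
  funext q
  simp [n0Y, firstOrderOp, pdX_eq_lineDeriv]

theorem dAlgY_eq_firstOrderOp (Φ : ℤ → ℝ × ℝ → ℂ) :
    dAlgY Φ = fun p => firstOrderOp (1, 0) 0 (Φ p) :=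
  funext fun p => n0Y_eq_firstOrderOp (Φ p)

theorem n0Z_eq_firstOrderOp (μ : ℝ) (f : ℝ × ℝ → ℂ) :
    n0Z μ f = firstOrderOp 0 (fun q => (Real.pi : ℂ) * Complex.I * q.1 / μ) f := by
  funext q
  simp [n0Z, firstOrderOp, lineDeriv_zero]

theorem dAlgZ_eq_firstOrderOp (Φ : ℤ → ℝ × ℝ → ℂ) :
    dAlgZ Φ = fun p : ℤ => firstOrderOp 0 (fun _ => 2 * (Real.pi : ℂ) * Complex.I * p) (Φ p) := by
  funext p q
  simp [dAlgZ, firstOrderOp, lineDeriv_zero]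

section Leibniz

variable {μ : ℝ} {f : ℝ × ℝ → ℂ} {Φ : ℤ → ℝ × ℝ → ℂ}

theorem n0X_rAct (c : ℕ) (hμ : μ ≠ 0) (ν : ℝ) (hf : ∀ q, LineDifferentiableAt ℝ f q (0, 1))
    (hΦ : ∀ p q, LineDifferentiableAt ℝ (Φ p) q (0, 1)) (hfin : (Function.support Φ).Finite) :
    n0X c μ (rAct μ ν f Φ) = rAct μ ν (n0X c μ f) Φ + rAct μ ν f (dAlgX c μ Φ) := by
  simp only [rAct_eq_translateSum, n0X_eq_firstOrderOp, dAlgX_eq_firstOrderOp]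
  refine firstOrderOp_translateSum hfin hf hΦ fun p q => ?_
  have hμ' : (μ : ℂ) ≠ 0 := Complex.ofReal_ne_zero.mpr hμ
  simp only [Prod.fst_add, Complex.ofReal_add, Complex.ofReal_mul, Complex.ofReal_ofNat,
    Complex.ofReal_intCast, map_sub, map_add, map_mul, map_ofNat, map_natCast, map_intCast,
    Complex.conj_ofReal, Complex.conj_I]
  field_simp
  ring

theorem n0Y_rAct (μ ν : ℝ) (hf : ∀ q, LineDifferentiableAt ℝ f q (1, 0))
    (hΦ : ∀ p q, LineDifferentiableAt ℝ (Φ p) q (1, 0)) (hfin : (Function.support Φ).Finite) :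
    n0Y (rAct μ ν f Φ) = rAct μ ν (n0Y f) Φ + rAct μ ν f (dAlgY Φ) := by
  simp only [rAct_eq_translateSum, n0Y_eq_firstOrderOp, dAlgY_eq_firstOrderOp]
  exact firstOrderOp_translateSum hfin hf hΦ fun p q => by simp

theorem n0Z_rAct (hμ : μ ≠ 0) (ν : ℝ) (f : ℝ × ℝ → ℂ) (hfin : (Function.support Φ).Finite) :
    n0Z μ (rAct μ ν f Φ) = rAct μ ν (n0Z μ f) Φ + rAct μ ν f (dAlgZ Φ) := by
  simp only [rAct_eq_translateSum, n0Z_eq_firstOrderOp, dAlgZ_eq_firstOrderOp]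
  refine firstOrderOp_translateSum hfin (fun _ => lineDifferentiableAt_zero)
    (fun _ _ => lineDifferentiableAt_zero) fun p q => ?_
  have hμ' : (μ : ℂ) ≠ 0 := Complex.ofReal_ne_zero.mpr hμ
  simp only [Prod.fst_add, Complex.ofReal_add, Complex.ofReal_mul, Complex.ofReal_ofNat,
    Complex.ofReal_intCast, map_mul, map_ofNat, map_intCast, Complex.conj_ofReal, Complex.conj_I]
  field_simp
  ring

end Leibniz

theorem statement0_general (c : ℕ) {μ : ℝ} (hμ : μ ≠ 0) (ν : ℝ)
    {f : ℝ × ℝ → ℂ} (hf : Differentiable ℝ f)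
    {Φ : ℤ → ℝ × ℝ → ℂ} (hΦ : ∀ p, Differentiable ℝ (Φ p))
    (hfin : (Function.support Φ).Finite) :
    n0X c μ (rAct μ ν f Φ) = rAct μ ν (n0X c μ f) Φ + rAct μ ν f (dAlgX c μ Φ) ∧
    n0Y (rAct μ ν f Φ) = rAct μ ν (n0Y f) Φ + rAct μ ν f (dAlgY Φ) ∧
    n0Z μ (rAct μ ν f Φ) = rAct μ ν (n0Z μ f) Φ + rAct μ ν f (dAlgZ Φ) := by
  have hf_line (v q : ℝ × ℝ) : LineDifferentiableAt ℝ f q v := (hf q).lineDifferentiableAt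
  have hΦ_line (v : ℝ × ℝ) (p : ℤ) (q : ℝ × ℝ) : LineDifferentiableAt ℝ (Φ p) q v :=
    (hΦ p q).lineDifferentiableAt
  exact ⟨n0X_rAct c hμ ν (hf_line _) (hΦ_line _) hfin,
    n0Y_rAct μ ν (hf_line _) (hΦ_line _) hfin, n0Z_rAct hμ ν f hfin⟩

/-- Proposition A.1, Leibniz rule for `∇⁰`: for every module function `f`,
every smooth algebra element `Φ`, and every `W ∈ {X, Y, Z}`,
`∇⁰_W(f·Φ) = (∇⁰_W f)·Φ + f·(δ_W Φ)` as functions on `ℝ × ℝ`. -/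
theorem statement0 (c : ℕ) (hc : 0 < c) (μ ν : ℝ) (hμ : μ ≠ 0)
    (f : ℝ × ℝ → ℂ) (hf : IsModuleFn f)
    (Φ : ℤ → ℝ × ℝ → ℂ) (hΦ : IsAlgElem c ν Φ) :
    n0X c μ (rAct μ ν f Φ) = rAct μ ν (n0X c μ f) Φ + rAct μ ν f (dAlgX c μ Φ) ∧
    n0Y (rAct μ ν f Φ) = rAct μ ν (n0Y f) Φ + rAct μ ν f (dAlgY Φ) ∧
    n0Z μ (rAct μ ν f Φ) = rAct μ ν (n0Z μ f) Φ + rAct μ ν f (dAlgZ Φ) := by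
  obtain ⟨hf_smooth, -, -⟩ := hf
  obtain ⟨hΦ_smooth, -, hΦ_fin, -⟩ := hΦ
  exact statement0_general c hμ ν (hf_smooth.differentiable (by simp))
    (fun p => (hΦ_smooth p).differentiable (by simp)) hΦ_fin

end
end

section
/- Compatibility of the connection ∇⁰ with the D-valued inner product (Proposition A.1, second part): for all module functions f, g, every W ∈ {X, Y, Z}, and every (x, y, p) ∈ ℝ × ℝ × ℤ, ⟨∇⁰_W f, g⟩(x,y,p) + ⟨f, ∇⁰_W g⟩(x,y,p) = (δ_W⟨f,g⟩)(x,y,p). -/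
noncomputable section

/-!
The compatibility already holds for each summand of `⟨f, g⟩` separately. For `Y` this is the product
rule. For `Z` and `X` the two multiplication terms combine into a difference of values at `x + k`
and `x - 2pμ + k`, and
`(x + k) - (x - 2pμ + k) = 2pμ`, `(x + k)² - (x - 2pμ + k)² = 4pμ((x - pμ) + k)`;
in the second one the `k`-part is cancelled by the `y`-derivative of `e(-ckp(y - pν))`.
Since the integer translates of a compact set are locally finite, so is the sum over `k`, and the
`δ_W` may be applied term by term.
-/

open Function Topology

section LocallyFiniteSums

variable {ι : Type*}

variable {𝕜 E : Type*} [NontriviallyNormedField 𝕜] [NormedAddCommGroup E] [NormedSpace 𝕜 E]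
  {u : ι → 𝕜 → E}

lemma hasFiniteSupport_deriv_of_locallyFinite (hfin : LocallyFinite fun i => support (u i))
    (x : 𝕜) : HasFiniteSupport fun i => deriv (u i) x :=
  (hfin.closure.point_finite x).subset fun _ hi => support_deriv_subset hi

lemma deriv_finsum_of_locallyFinite {x : 𝕜} (hfin : LocallyFinite fun i => support (u i))
    (hu : ∀ i, DifferentiableAt 𝕜 (u i) x) :
    deriv (fun t => ∑ᶠ i, u i t) x = ∑ᶠ i, deriv (u i) x := by
  obtain ⟨s, hs⟩ := hfin.exists_finset_support x
  have hsum : (fun t => ∑ᶠ i, u i t) =ᶠ[𝓝 x] fun t => ∑ i ∈ s, u i t :=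
    hs.mono fun t ht => finsum_eq_sum_of_support_subset _ ht
  have hderiv : support (fun i => deriv (u i) x) ⊆ s := by
    refine support_subset_iff'.mpr fun i hi => ?_
    have hzero : u i =ᶠ[𝓝 x] fun _ => 0 :=
      hs.mono fun t ht => support_subset_iff'.mp ht i hi
    rw [hzero.deriv_eq, deriv_const]
  rw [hsum.deriv_eq, deriv_fun_sum fun i _ => hu i, finsum_eq_sum_of_support_subset _ hderiv]

lemma pdX_finsum {F : ι → ℝ × ℝ → ℂ} (hfin : LocallyFinite fun i => support (F i))
    (hF : ∀ i, Differentiable ℝ (F i)) (x y : ℝ) :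
    pdX (fun q => ∑ᶠ i, F i q) x y = ∑ᶠ i, pdX (F i) x y :=
  deriv_finsum_of_locallyFinite (u := fun i t => F i (t, y))
    (hfin.preimage_continuous (Continuous.prodMk_left y)) fun i => by fun_prop

lemma pdY_finsum {F : ι → ℝ × ℝ → ℂ} (hfin : LocallyFinite fun i => support (F i))
    (hF : ∀ i, Differentiable ℝ (F i)) (x y : ℝ) :
    pdY (fun q => ∑ᶠ i, F i q) x y = ∑ᶠ i, pdY (F i) x y :=
  deriv_finsum_of_locallyFinite (u := fun i t => F i (x, t))
    (hfin.preimage_continuous (Continuous.prodMk_right x)) fun i => by fun_prop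

variable {Φ : ι → ℤ → ℝ × ℝ → ℂ} {p : ℤ}

lemma dAlgX_finsum (c : ℕ) (μ : ℝ) (hfin : LocallyFinite fun i => support (Φ i p))
    (hΦ : ∀ i, Differentiable ℝ (Φ i p)) (q : ℝ × ℝ) :
    dAlgX c μ (fun p q => ∑ᶠ i, Φ i p q) p q = ∑ᶠ i, dAlgX c μ (Φ i) p q := by
  have hvalue : HasFiniteSupport fun i => Φ i p q := hfin.point_finite q
  have hderiv : HasFiniteSupport fun i => pdY (Φ i p) q.1 q.2 :=
    hasFiniteSupport_deriv_of_locallyFinite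
      (hfin.preimage_continuous (Continuous.prodMk_right q.1)) q.2
  simp only [dAlgX]
  rw [pdY_finsum hfin hΦ, mul_finsum,
    finsum_sub_distrib (hvalue.subset (support_mul_subset_right _ _)) hderiv]

lemma dAlgY_finsum (hfin : LocallyFinite fun i => support (Φ i p))
    (hΦ : ∀ i, Differentiable ℝ (Φ i p)) (q : ℝ × ℝ) :
    dAlgY (fun p q => ∑ᶠ i, Φ i p q) p q = ∑ᶠ i, dAlgY (Φ i) p q := by
  simp only [dAlgY]
  rw [pdX_finsum hfin hΦ, finsum_neg_distrib]

lemma dAlgZ_finsum (q : ℝ × ℝ) :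
    dAlgZ (fun p q => ∑ᶠ i, Φ i p q) p q = ∑ᶠ i, dAlgZ (Φ i) p q :=
  mul_finsum _ _

end LocallyFiniteSums

/-- The support condition on module functions: `f` vanishes outside `K × ℝ` for some compact
`K ⊆ ℝ`. -/
def HasCompactStripSupport (f : ℝ × ℝ → ℂ) : Prop :=
  ∃ K : Set ℝ, IsCompact K ∧ ∀ x y : ℝ, x ∉ K → f (x, y) = 0

namespace HasCompactStripSupport

variable {f : ℝ × ℝ → ℂ}

lemma n0X (hf : HasCompactStripSupport f) (c : ℕ) (μ : ℝ) :
    HasCompactStripSupport (n0X c μ f) := by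
  obtain ⟨K, hK, hfK⟩ := hf
  refine ⟨K, hK, fun x y hx => ?_⟩
  simp [_root_.n0X, pdY, hfK x _ hx]

lemma n0Y (hf : HasCompactStripSupport f) : HasCompactStripSupport (n0Y f) := by
  obtain ⟨K, hK, hfK⟩ := hf
  refine ⟨K, hK, fun x y hx => ?_⟩
  have hzero : (fun t => f (t, y)) =ᶠ[𝓝 x] fun _ => 0 :=
    (hK.isClosed.isOpen_compl.eventually_mem hx).mono fun t ht => hfK t y ht
  simp [_root_.n0Y, pdX, hzero.deriv_eq]

lemma n0Z (hf : HasCompactStripSupport f) (μ : ℝ) : HasCompactStripSupport (n0Z μ f) := by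
  obtain ⟨K, hK, hfK⟩ := hf
  refine ⟨K, hK, fun x y hx => ?_⟩
  simp [_root_.n0Z, hfK x y hx]

end HasCompactStripSupport

open scoped Pointwise in
lemma locallyFinite_int_translates {K : Set ℝ} (hK : IsCompact K) :
    LocallyFinite fun k : ℤ => {x : ℝ | x + k ∈ K} := by
  intro x
  refine ⟨Metric.closedBall x 1, Metric.closedBall_mem_nhds x one_pos, ?_⟩
  have hfinite : ((↑) ⁻¹' (K + -Metric.closedBall x 1) : Set ℤ).Finite :=
    (Int.isClosedEmbedding_coe_real.isCompact_preimage
      (hK.add (isCompact_closedBall x 1).neg)).finite_of_discrete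
  refine hfinite.subset fun k ⟨t, htK, htx⟩ => ?_
  exact Set.mem_add.mpr ⟨t + k, htK, -t, by simpa using htx, by ring⟩

lemma hasDerivAt_e2 (t : ℝ) : HasDerivAt e2 (2 * Real.pi * Complex.I * e2 t) t := by
  have hexponent : HasDerivAt (fun s : ℝ => 2 * Real.pi * Complex.I * (s : ℂ))
      (2 * Real.pi * Complex.I) t := by
    simpa using (hasDerivAt_id t).ofReal_comp.const_mul (2 * Real.pi * Complex.I)
  exact hexponent.cexp.congr_deriv (mul_comm _ _)

lemma hasDerivAt_pdX {f : ℝ × ℝ → ℂ} (hf : Differentiable ℝ f) (x y : ℝ) :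
    HasDerivAt (fun t => f (t, y)) (pdX f x y) x :=
  DifferentiableAt.hasDerivAt (by fun_prop)

lemma hasDerivAt_pdY {f : ℝ × ℝ → ℂ} (hf : Differentiable ℝ f) (x y : ℝ) :
    HasDerivAt (fun t => f (x, t)) (pdY f x y) y :=
  DifferentiableAt.hasDerivAt (by fun_prop)

/-- The `k`-th summand of `⟨f, g⟩ = ipD c μ ν f g`, with the arguments `p` and `(x, y)` last so that
it is acted on by `dAlgX`, `dAlgY` and `dAlgZ`. -/
def ipDSummand (c : ℕ) (μ ν : ℝ) (f g : ℝ × ℝ → ℂ) (k : ℤ) : ℤ → ℝ × ℝ → ℂ := fun p q =>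
  e2 (-((c : ℝ) * (k : ℝ) * (p : ℝ) * (q.2 - (p : ℝ) * ν))) * f (q.1 + (k : ℝ), q.2) *
    (starRingEnd ℂ) (g (q.1 - 2 * (p : ℝ) * μ + (k : ℝ), q.2 - 2 * (p : ℝ) * ν))

section Summand

variable {c : ℕ} {μ ν : ℝ} {f g : ℝ × ℝ → ℂ} {p : ℤ}

lemma ipD_eq_finsum_ipDSummand :
    ipD c μ ν f g = fun p q => ∑ᶠ k : ℤ, ipDSummand c μ ν f g k p q :=
  rfl

lemma locallyFinite_support_ipDSummand (hf : HasCompactStripSupport f) :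
    LocallyFinite fun k : ℤ => support (ipDSummand c μ ν f g k p) := by
  obtain ⟨K, hK, hfK⟩ := hf
  refine ((locallyFinite_int_translates hK).preimage_continuous continuous_fst).subset
    fun k q hq => ?_
  by_contra hqK
  exact hq (by simp [ipDSummand, hfK _ q.2 hqK])

lemma hasFiniteSupport_ipDSummand (hf : HasCompactStripSupport f) (q : ℝ × ℝ) :
    HasFiniteSupport fun k : ℤ => ipDSummand c μ ν f g k p q :=
  (locallyFinite_support_ipDSummand hf).point_finite q

lemma differentiable_ipDSummand (hf : Differentiable ℝ f) (hg : Differentiable ℝ g) (k : ℤ) :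
    Differentiable ℝ (ipDSummand c μ ν f g k p) := by
  have he : Differentiable ℝ e2 := fun t => (hasDerivAt_e2 t).differentiableAt
  unfold ipDSummand
  fun_prop

lemma pdX_ipDSummand (hf : Differentiable ℝ f) (hg : Differentiable ℝ g) (k : ℤ) (x y : ℝ) :
    pdX (ipDSummand c μ ν f g k p) x y =
      ipDSummand c μ ν (fun q => pdX f q.1 q.2) g k p (x, y) +
        ipDSummand c μ ν f (fun q => pdX g q.1 q.2) k p (x, y) := by
  have hf' : HasDerivAt (fun t => f (t + k, y)) (pdX f (x + k) y) x :=
    (hasDerivAt_pdX hf (x + k) y).comp_add_const x k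
  have hg' : HasDerivAt (fun t => g (t - 2 * p * μ + k, y - 2 * p * ν))
      (pdX g (x - 2 * p * μ + k) (y - 2 * p * ν)) x :=
    ((hasDerivAt_pdX hg _ _).comp_add_const (x - 2 * p * μ) (k : ℝ)).comp_sub_const x (2 * p * μ)
  exact ((hf'.const_mul (e2 (-((c : ℝ) * k * p * (y - p * ν))))).mul hg'.star).deriv

lemma pdY_ipDSummand (hf : Differentiable ℝ f) (hg : Differentiable ℝ g) (k : ℤ) (x y : ℝ) :
    pdY (ipDSummand c μ ν f g k p) x y =
      -(2 * Real.pi * Complex.I * c * k * p) * ipDSummand c μ ν f g k p (x, y) +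
        ipDSummand c μ ν (fun q => pdY f q.1 q.2) g k p (x, y) +
          ipDSummand c μ ν f (fun q => pdY g q.1 q.2) k p (x, y) := by
  have hphase : HasDerivAt (fun t : ℝ => -((c : ℝ) * k * p * (t - p * ν)))
      (-((c : ℝ) * k * p)) y := by
    simpa using (((hasDerivAt_id y).sub_const (p * ν)).const_mul ((c : ℝ) * k * p)).fun_neg
  have he := (hasDerivAt_e2 _).scomp y hphase
  have hg' : HasDerivAt (fun t => g (x - 2 * p * μ + k, t - 2 * p * ν))
      (pdY g (x - 2 * p * μ + k) (y - 2 * p * ν)) y :=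
    (hasDerivAt_pdY hg _ _).comp_sub_const y (2 * p * ν)
  refine ((he.mul (hasDerivAt_pdY hf (x + k) y)).mul hg'.star).deriv.trans ?_
  simp only [ipDSummand, comp_apply, Pi.mul_apply, Complex.real_smul, starRingEnd_apply]
  push_cast
  ring

lemma dAlgX_ipDSummand (hμ : μ ≠ 0) (hf : Differentiable ℝ f) (hg : Differentiable ℝ g) (k : ℤ)
    (q : ℝ × ℝ) :
    dAlgX c μ (ipDSummand c μ ν f g k) p q =
      ipDSummand c μ ν (n0X c μ f) g k p q + ipDSummand c μ ν f (n0X c μ g) k p q := by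
  have hμ' : (μ : ℂ) ≠ 0 := Complex.ofReal_ne_zero.mpr hμ
  have hleft : ipDSummand c μ ν (n0X c μ f) g k p q =
      -ipDSummand c μ ν (fun q => pdY f q.1 q.2) g k p q +
        Real.pi * c * Complex.I / (2 * μ) * (q.1 + k) ^ 2 * ipDSummand c μ ν f g k p q := by
    simp only [ipDSummand, n0X]
    push_cast
    ring
  have hright : ipDSummand c μ ν f (n0X c μ g) k p q =
      -ipDSummand c μ ν f (fun q => pdY g q.1 q.2) k p q -
        Real.pi * c * Complex.I / (2 * μ) * (q.1 - 2 * p * μ + k) ^ 2 *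
          ipDSummand c μ ν f g k p q := by
    simp only [ipDSummand, n0X, map_add, map_neg, map_mul, map_div₀, map_pow, Complex.conj_ofReal,
      Complex.conj_I, map_natCast, map_ofNat]
    push_cast
    ring
  have hsq : Real.pi * c * Complex.I / (2 * μ) *
      (((q.1 : ℂ) + k) ^ 2 - (q.1 - 2 * p * μ + k) ^ 2) =
        2 * Real.pi * Complex.I * c * p * (q.1 - p * μ + k) := by
    field_simp
    ring
  rw [dAlgX, pdY_ipDSummand hf hg, hleft, hright]
  linear_combination -(ipDSummand c μ ν f g k p q) * hsq

lemma dAlgY_ipDSummand (hf : Differentiable ℝ f) (hg : Differentiable ℝ g) (k : ℤ) (q : ℝ × ℝ) :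
    dAlgY (ipDSummand c μ ν f g k) p q =
      ipDSummand c μ ν (n0Y f) g k p q + ipDSummand c μ ν f (n0Y g) k p q := by
  rw [dAlgY, pdX_ipDSummand hf hg]
  simp only [ipDSummand, n0Y, map_neg]
  ring

lemma dAlgZ_ipDSummand (hμ : μ ≠ 0) (k : ℤ) (q : ℝ × ℝ) :
    dAlgZ (ipDSummand c μ ν f g k) p q =
      ipDSummand c μ ν (n0Z μ f) g k p q + ipDSummand c μ ν f (n0Z μ g) k p q := by
  have hμ' : (μ : ℂ) ≠ 0 := Complex.ofReal_ne_zero.mpr hμ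
  simp only [dAlgZ, ipDSummand, n0Z, map_mul, map_div₀, Complex.conj_ofReal, Complex.conj_I]
  push_cast
  field_simp
  ring

lemma ipD_add_ipD_eq_finsum {f' g' : ℝ × ℝ → ℂ} (hf' : HasCompactStripSupport f')
    (hf : HasCompactStripSupport f) (q : ℝ × ℝ) :
    ipD c μ ν f' g p q + ipD c μ ν f g' p q =
      ∑ᶠ k : ℤ, (ipDSummand c μ ν f' g k p q + ipDSummand c μ ν f g' k p q) :=
  (finsum_add_distrib (hasFiniteSupport_ipDSummand hf' q)
    (hasFiniteSupport_ipDSummand hf q)).symm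

end Summand

theorem statement1_general (c : ℕ) {μ : ℝ} (ν : ℝ) (hμ : μ ≠ 0) {f g : ℝ × ℝ → ℂ}
    (hf : Differentiable ℝ f) (hfK : HasCompactStripSupport f) (hg : Differentiable ℝ g)
    (p : ℤ) (q : ℝ × ℝ) :
    (ipD c μ ν (n0X c μ f) g p q + ipD c μ ν f (n0X c μ g) p q =
        dAlgX c μ (ipD c μ ν f g) p q) ∧
      (ipD c μ ν (n0Y f) g p q + ipD c μ ν f (n0Y g) p q = dAlgY (ipD c μ ν f g) p q) ∧
      (ipD c μ ν (n0Z μ f) g p q + ipD c μ ν f (n0Z μ g) p q = dAlgZ (ipD c μ ν f g) p q) := by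
  have hfin : LocallyFinite fun k : ℤ => support (ipDSummand c μ ν f g k p) :=
    locallyFinite_support_ipDSummand hfK
  have hdiff : ∀ k : ℤ, Differentiable ℝ (ipDSummand c μ ν f g k p) :=
    differentiable_ipDSummand hf hg
  refine ⟨?_, ?_, ?_⟩
  · rw [ipD_add_ipD_eq_finsum (hfK.n0X c μ) hfK, ipD_eq_finsum_ipDSummand,
      dAlgX_finsum c μ hfin hdiff]
    exact finsum_congr fun k => (dAlgX_ipDSummand hμ hf hg k q).symm
  · rw [ipD_add_ipD_eq_finsum hfK.n0Y hfK, ipD_eq_finsum_ipDSummand, dAlgY_finsum hfin hdiff]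
    exact finsum_congr fun k => (dAlgY_ipDSummand hf hg k q).symm
  · rw [ipD_add_ipD_eq_finsum (hfK.n0Z μ) hfK, ipD_eq_finsum_ipDSummand, dAlgZ_finsum]
    exact finsum_congr fun k => (dAlgZ_ipDSummand hμ k q).symm

/-- Proposition A.1, compatibility of `∇⁰` with `⟨·,·⟩_R^D`: for all module
functions `f, g`, every `W ∈ {X, Y, Z}`, and every `(x, y, p)`,
`⟨∇⁰_W f, g⟩(x,y,p) + ⟨f, ∇⁰_W g⟩(x,y,p) = (δ_W⟨f,g⟩)(x,y,p)`. -/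
theorem statement1 (c : ℕ) (hc : 0 < c) (μ ν : ℝ) (hμ : μ ≠ 0)
    (f g : ℝ × ℝ → ℂ) (hf : IsModuleFn f) (hg : IsModuleFn g) :
    ∀ (x y : ℝ) (p : ℤ),
      (ipD c μ ν (n0X c μ f) g p (x, y) + ipD c μ ν f (n0X c μ g) p (x, y) =
        2 * (Real.pi : ℂ) * Complex.I * (c : ℂ) * (p : ℂ) * ((x : ℂ) - (p : ℂ) * (μ : ℂ)) *
          ipD c μ ν f g p (x, y) - pdY (ipD c μ ν f g p) x y) ∧
      (ipD c μ ν (n0Y f) g p (x, y) + ipD c μ ν f (n0Y g) p (x, y) =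
        -pdX (ipD c μ ν f g p) x y) ∧
      (ipD c μ ν (n0Z μ f) g p (x, y) + ipD c μ ν f (n0Z μ g) p (x, y) =
        2 * (Real.pi : ℂ) * Complex.I * (p : ℂ) * ipD c μ ν f g p (x, y)) := fun x y p =>
  statement1_general c ν hμ (hf.1.differentiable (by simp)) hf.2.2
    (hg.1.differentiable (by simp)) p (x, y)

end
end

section
/- Constant curvature of the connection ∇⁰ (Proposition A.2): for every module function f, (∇⁰_X ∇⁰_Y − ∇⁰_Y ∇⁰_X − c·∇⁰_Z) f = 0, (∇⁰_X ∇⁰_Z − ∇⁰_Z ∇⁰_X) f = 0, and (∇⁰_Y ∇⁰_Z − ∇⁰_Z ∇⁰_Y) f = −(πi/μ)·f. (These are the curvature operators Θ_{∇⁰}(X,Y), Θ_{∇⁰}(X,Z), Θ_{∇⁰}(Y,Z) for the Heisenberg Lie algebra basis with [X,Y] = cZ, [X,Z] = [Y,Z] = 0; as an element of E^c_{μν} the last one is (πi/μ)·Id_E.) -/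
noncomputable section

/-!
Write `∇_X = -∂_y + a(x)`, `∇_Y = -∂_x` and `∇_Z = b(x)`. As `a` and `b` do not depend on `y` and
`∂_x ∂_y = ∂_y ∂_x`, the Leibniz rule gives `[∇_X, ∇_Y] = a'`, `[∇_X, ∇_Z] = 0` and
`[∇_Y, ∇_Z] = -b'`. For `∇⁰` one has `a' = c b` and `b' = πi/μ`.
-/

section Slices

variable {𝕜 F : Type*} [NontriviallyNormedField 𝕜] [NormedAddCommGroup F] [NormedSpace 𝕜 F]
  {f : 𝕜 × 𝕜 → F} {f' : 𝕜 × 𝕜 →L[𝕜] F} {x y : 𝕜}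

theorem hasDerivAt_slice_fst (hf : HasFDerivAt f f' (x, y)) :
    HasDerivAt (fun t => f (t, y)) (f' (1, 0)) x :=
  hf.comp_hasDerivAt x ((hasDerivAt_id x).prodMk (hasDerivAt_const x y))

theorem hasDerivAt_slice_snd (hf : HasFDerivAt f f' (x, y)) :
    HasDerivAt (fun t => f (x, t)) (f' (0, 1)) y :=
  hf.comp_hasDerivAt y ((hasDerivAt_const y x).prodMk (hasDerivAt_id y))

end Slices

section SecondDerivative

variable {𝕜 E F : Type*} [NontriviallyNormedField 𝕜] [NormedAddCommGroup E] [NormedSpace 𝕜 E]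
  [NormedAddCommGroup F] [NormedSpace 𝕜 F] {f : E → F} {p : E}

theorem eventually_differentiableAt_of_contDiffAt (hf : ContDiffAt 𝕜 1 f p) :
    ∀ᶠ q in nhds p, DifferentiableAt 𝕜 f q :=
  (hf.eventually (by simp)).mono fun _ hq => hq.differentiableAt one_ne_zero

theorem hasFDerivAt_fderiv_apply (hf : DifferentiableAt 𝕜 (fderiv 𝕜 f) p) (v : E) :
    HasFDerivAt (fun q => fderiv 𝕜 f q v) ((fderiv 𝕜 (fderiv 𝕜 f) p).flip v) p := by
  simpa using hf.hasFDerivAt.clm_apply (hasFDerivAt_const v p)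

theorem differentiableAt_fderiv_of_contDiffAt (hf : ContDiffAt 𝕜 2 f p) :
    DifferentiableAt 𝕜 (fderiv 𝕜 f) p :=
  (hf.fderiv_right (m := 1) (by norm_num)).differentiableAt one_ne_zero

end SecondDerivative

section PartialDerivatives

variable {f : ℝ × ℝ → ℂ} {x y : ℝ}

theorem pdX_eq_fderiv (hf : DifferentiableAt ℝ f (x, y)) :
    pdX f x y = fderiv ℝ f (x, y) (1, 0) :=
  (hasDerivAt_slice_fst hf.hasFDerivAt).deriv

theorem pdY_eq_fderiv (hf : DifferentiableAt ℝ f (x, y)) :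
    pdY f x y = fderiv ℝ f (x, y) (0, 1) :=
  (hasDerivAt_slice_snd hf.hasFDerivAt).deriv

theorem hasFDerivAt_pdX {p : ℝ × ℝ} (hf : ContDiffAt ℝ 2 f p) :
    HasFDerivAt (fun q => pdX f q.1 q.2) ((fderiv ℝ (fderiv ℝ f) p).flip (1, 0)) p := by
  have hpdX : (fun q => pdX f q.1 q.2) =ᶠ[nhds p] fun q => fderiv ℝ f q (1, 0) :=
    (eventually_differentiableAt_of_contDiffAt (hf.of_le one_le_two)).mono
      fun _ hq => pdX_eq_fderiv hq
  exact (hasFDerivAt_fderiv_apply (differentiableAt_fderiv_of_contDiffAt hf)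
    (1, 0)).congr_of_eventuallyEq hpdX

theorem hasFDerivAt_pdY {p : ℝ × ℝ} (hf : ContDiffAt ℝ 2 f p) :
    HasFDerivAt (fun q => pdY f q.1 q.2) ((fderiv ℝ (fderiv ℝ f) p).flip (0, 1)) p := by
  have hpdY : (fun q => pdY f q.1 q.2) =ᶠ[nhds p] fun q => fderiv ℝ f q (0, 1) :=
    (eventually_differentiableAt_of_contDiffAt (hf.of_le one_le_two)).mono
      fun _ hq => pdY_eq_fderiv hq
  exact (hasFDerivAt_fderiv_apply (differentiableAt_fderiv_of_contDiffAt hf)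
    (0, 1)).congr_of_eventuallyEq hpdY

theorem pdX_pdY_comm (hf : ContDiffAt ℝ 2 f (x, y)) :
    pdX (fun q => pdY f q.1 q.2) x y = pdY (fun q => pdX f q.1 q.2) x y := by
  have hsymm : IsSymmSndFDerivAt ℝ f (x, y) := hf.isSymmSndFDerivAt (by simp)
  calc pdX (fun q => pdY f q.1 q.2) x y
      = fderiv ℝ (fderiv ℝ f) (x, y) (1, 0) (0, 1) :=
        (hasDerivAt_slice_fst (hasFDerivAt_pdY hf)).deriv
    _ = fderiv ℝ (fderiv ℝ f) (x, y) (0, 1) (1, 0) := hsymm.eq _ _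
    _ = pdY (fun q => pdX f q.1 q.2) x y :=
        (hasDerivAt_slice_snd (hasFDerivAt_pdX hf)).deriv.symm

end PartialDerivatives

/-- The operator of multiplication by a function `b` of the first coordinate; `∇⁰_Z` is the case
`b(x) = πix/μ`. -/
def mulFst (b : ℝ → ℂ) (f : ℝ × ℝ → ℂ) : ℝ × ℝ → ℂ := fun q => b q.1 * f q

/-- The operator `-∂_y + a(x)` with an arbitrary potential `a`; `∇⁰_X` is the case
`a(x) = πcix²/(2μ)`. -/
def connX (a : ℝ → ℂ) (f : ℝ × ℝ → ℂ) : ℝ × ℝ → ℂ := fun q => -pdY f q.1 q.2 + mulFst a f q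

section Commutators

variable {a b : ℝ → ℂ} {a' b' : ℂ} {f : ℝ × ℝ → ℂ} {q : ℝ × ℝ}

theorem hasDerivAt_mulFst_slice_fst {x y : ℝ} (hb : HasDerivAt b b' x)
    (hf : DifferentiableAt ℝ f (x, y)) :
    HasDerivAt (fun t => mulFst b f (t, y)) (b' * f (x, y) + b x * pdX f x y) x := by
  rw [pdX_eq_fderiv hf]
  exact hb.mul (hasDerivAt_slice_fst hf.hasFDerivAt)

theorem pdY_mulFst (b : ℝ → ℂ) (f : ℝ × ℝ → ℂ) (x y : ℝ) :
    pdY (mulFst b f) x y = b x * pdY f x y :=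
  deriv_const_mul_field (b x)

theorem pdY_n0Y (f : ℝ × ℝ → ℂ) (x y : ℝ) :
    pdY (n0Y f) x y = -pdY (fun q => pdX f q.1 q.2) x y :=
  deriv.fun_neg

theorem pdX_connX (ha : HasDerivAt a a' q.1) (hf : ContDiffAt ℝ 2 f q) :
    pdX (connX a f) q.1 q.2 =
      -pdX (fun p => pdY f p.1 p.2) q.1 q.2 + (a' * f q + a q.1 * pdX f q.1 q.2) := by
  have hpdY := hasDerivAt_slice_fst (hasFDerivAt_pdY hf)
  have hmul := hasDerivAt_mulFst_slice_fst ha (hf.differentiableAt two_ne_zero)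
  rw [pdX, pdX, hpdY.deriv]
  exact (hpdY.neg.add hmul).deriv

theorem connX_n0Y_sub_n0Y_connX (ha : HasDerivAt a a' q.1) (hf : ContDiffAt ℝ 2 f q) :
    connX a (n0Y f) q - n0Y (connX a f) q = a' * f q := by
  simp only [connX, pdY_n0Y, mulFst]
  simp only [n0Y, pdX_connX ha hf, pdX_pdY_comm hf]
  ring

theorem connX_mulFst_comm (a b : ℝ → ℂ) (f : ℝ × ℝ → ℂ) :
    connX a (mulFst b f) = mulFst b (connX a f) := by
  funext q
  simp only [connX, pdY_mulFst, mulFst]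
  ring

theorem n0Y_mulFst_sub_mulFst_n0Y (hb : HasDerivAt b b' q.1) (hf : DifferentiableAt ℝ f q) :
    n0Y (mulFst b f) q - mulFst b (n0Y f) q = -b' * f q := by
  have hpdX : pdX (mulFst b f) q.1 q.2 = b' * f q + b q.1 * pdX f q.1 q.2 :=
    (hasDerivAt_mulFst_slice_fst hb hf).deriv
  simp only [n0Y, hpdX, mulFst]
  ring

end Commutators

/-- The potential `πcix²/(2μ)` of `∇⁰_X`. -/
def potX (c : ℕ) (μ x : ℝ) : ℂ :=
  (Real.pi : ℂ) * (c : ℂ) * Complex.I / (2 * (μ : ℂ)) * (x : ℂ) ^ 2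

/-- The function `πix/μ` by which `∇⁰_Z` multiplies. -/
def potZ (μ x : ℝ) : ℂ := (Real.pi : ℂ) * Complex.I * (x : ℂ) / (μ : ℂ)

theorem n0X_eq_connX (c : ℕ) (μ : ℝ) : n0X c μ = connX (potX c μ) := rfl

theorem n0Z_eq_mulFst (μ : ℝ) : n0Z μ = mulFst (potZ μ) := rfl

theorem hasDerivAt_potX (c : ℕ) (μ x : ℝ) : HasDerivAt (potX c μ) (c * potZ μ x) x := by
  have hsq : HasDerivAt (fun t : ℝ => (t : ℂ) ^ 2) (2 * x) x := by
    simpa using! (hasDerivAt_id x).ofReal_comp.pow 2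
  refine (hsq.const_mul _).congr_deriv ?_
  rw [potZ]
  ring

theorem hasDerivAt_potZ (μ x : ℝ) : HasDerivAt (potZ μ) (Real.pi * Complex.I / μ) x := by
  simpa using! ((hasDerivAt_id x).ofReal_comp.const_mul (Real.pi * Complex.I)).div_const (μ : ℂ)

theorem statement2_general (c : ℕ) (μ : ℝ) (_hμ : μ ≠ 0) (f : ℝ × ℝ → ℂ) (hf : ContDiff ℝ 2 f) :
    (∀ q : ℝ × ℝ, n0X c μ (n0Y f) q - n0Y (n0X c μ f) q - (c : ℂ) * n0Z μ f q = 0) ∧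
    (∀ q : ℝ × ℝ, n0X c μ (n0Z μ f) q - n0Z μ (n0X c μ f) q = 0) ∧
    (∀ q : ℝ × ℝ, n0Y (n0Z μ f) q - n0Z μ (n0Y f) q
      = -((Real.pi : ℂ) * Complex.I / (μ : ℂ)) * f q) := by
  rw [n0X_eq_connX, n0Z_eq_mulFst]
  refine ⟨fun q => ?_, fun q => ?_, fun q => ?_⟩
  · rw [connX_n0Y_sub_n0Y_connX (hasDerivAt_potX c μ q.1) hf.contDiffAt, mulFst,
      mul_assoc, sub_self]
  · rw [connX_mulFst_comm, sub_self]
  · exact n0Y_mulFst_sub_mulFst_n0Y (hasDerivAt_potZ μ q.1) (hf.differentiable two_ne_zero q)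

/-- Proposition A.2, constant curvature of `∇⁰`: for every module function `f`,
`(∇⁰_X∇⁰_Y − ∇⁰_Y∇⁰_X − c·∇⁰_Z) f = 0`, `(∇⁰_X∇⁰_Z − ∇⁰_Z∇⁰_X) f = 0`, and
`(∇⁰_Y∇⁰_Z − ∇⁰_Z∇⁰_Y) f = −(πi/μ)·f`. -/
theorem statement2 (c : ℕ) (hc : 0 < c) (μ ν : ℝ) (hμ : μ ≠ 0)
    (f : ℝ × ℝ → ℂ) (hf : IsModuleFn f) :
    (∀ q : ℝ × ℝ, n0X c μ (n0Y f) q - n0Y (n0X c μ f) q - (c : ℂ) * n0Z μ f q = 0) ∧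
    (∀ q : ℝ × ℝ, n0X c μ (n0Z μ f) q - n0Z μ (n0X c μ f) q = 0) ∧
    (∀ q : ℝ × ℝ, n0Y (n0Z μ f) q - n0Z μ (n0Y f) q
      = -((Real.pi : ℂ) * Complex.I / (μ : ℂ)) * f q) := by
  exact statement2_general c μ hμ f (hf.1.of_le (by norm_cast))

end
end

section
/- Leibniz rule for the connection ∇¹ (part of Theorem 3.4): assume ν ≠ 0. For every module function f and every smooth algebra element Φ, ∇¹_X(f·Φ) = (∇¹_X f)·Φ + f·(δ_X Φ) as functions on ℝ × ℝ. -/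
noncomputable section

/-- `(∇¹_X f)(x,y) = −∂f/∂y(x,y) + (πci/(2μ)·x² − νix + μiy)·f(x,y)`. -/
def n1X (c : ℕ) (μ ν : ℝ) (f : ℝ × ℝ → ℂ) : ℝ × ℝ → ℂ := fun q =>
  -pdY f q.1 q.2 +
    ((Real.pi : ℂ) * (c : ℂ) * Complex.I / (2 * (μ : ℂ)) * (q.1 : ℂ) ^ 2
      - (ν : ℂ) * Complex.I * (q.1 : ℂ) + (μ : ℂ) * Complex.I * (q.2 : ℂ)) * f q

/-!
Both `∇¹_X` and `δ_X` are `-∂/∂y` plus multiplication by a function. The right action is a finite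
sum of translates of products, so `∂/∂y` satisfies the Leibniz rule for it. The multiplication terms
match because the potential of `∇¹_X` decreases under translation by `(2pμ, 2pν)` exactly by the
conjugate of the multiplier of `δ_X` in degree `p`: the linear part `-νix + μiy` is invariant,
and `πci/(2μ) · (x² - (x + 2pμ)²) = -2πicp((x + 2pμ) - pμ)`.
-/

open Function

/-- The translation by `(2pμ, 2pν)` along which the `p`-th term of `rAct μ ν f Φ` is evaluated. -/
def shift (μ ν : ℝ) (p : ℤ) (q : ℝ × ℝ) : ℝ × ℝ := (q.1 + 2 * p * μ, q.2 + 2 * p * ν)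

/-- The zeroth-order coefficient of `∇¹_X`, so that `∇¹_X = -∂/∂y + connPotential`. -/
def connPotential (c : ℕ) (μ ν : ℝ) (q : ℝ × ℝ) : ℂ :=
  (Real.pi : ℂ) * c * Complex.I / (2 * μ) * (q.1 : ℂ) ^ 2
    - ν * Complex.I * q.1 + μ * Complex.I * q.2

/-- The zeroth-order coefficient of `δ_X` in degree `p`, so that
`δ_X = derivMultiplier - ∂/∂y`. -/
def derivMultiplier (c : ℕ) (μ : ℝ) (p : ℤ) (q : ℝ × ℝ) : ℂ :=
  2 * (Real.pi : ℂ) * Complex.I * c * p * ((q.1 : ℂ) - p * μ)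

theorem n1X_eq_neg_pdY_add_mul (c : ℕ) (μ ν : ℝ) (f : ℝ × ℝ → ℂ) :
    n1X c μ ν f = -uncurry (pdY f) + connPotential c μ ν * f := rfl

theorem dAlgX_eq_mul_sub_pdY (c : ℕ) (μ : ℝ) (Φ : ℤ → ℝ × ℝ → ℂ) :
    dAlgX c μ Φ = derivMultiplier c μ * Φ - fun p ↦ uncurry (pdY (Φ p)) := rfl

theorem connPotential_eq_shift_add_conj (c : ℕ) {μ : ℝ} (hμ : μ ≠ 0) (ν : ℝ) (p : ℤ)
    (q : ℝ × ℝ) :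
    connPotential c μ ν q = connPotential c μ ν (shift μ ν p q) +
      starRingEnd ℂ (derivMultiplier c μ p (shift μ ν p q)) := by
  have hμ' : (μ : ℂ) ≠ 0 := by exact_mod_cast hμ
  simp only [connPotential, derivMultiplier, shift, map_sub, map_mul, Complex.conj_I,
    Complex.conj_ofReal, map_natCast, map_intCast, map_ofNat]
  push_cast
  field_simp
  ring

theorem support_pdY_subset (Φ : ℤ → ℝ × ℝ → ℂ) :
    (support fun p ↦ uncurry (pdY (Φ p))) ⊆ support Φ := by
  refine support_subset_iff'.2 fun p hp ↦ ?_
  ext q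
  simp [uncurry, pdY, notMem_support.1 hp]

theorem hasDerivAt_comp_shift {f : ℝ × ℝ → ℂ} (hf : ∀ x, Differentiable ℝ fun y ↦ f (x, y))
    (μ ν : ℝ) (p : ℤ) (x y : ℝ) :
    HasDerivAt (fun t ↦ f (shift μ ν p (x, t))) (uncurry (pdY f) (shift μ ν p (x, y))) y :=
  (hf (x + 2 * p * μ) _).hasDerivAt.comp_add_const y (2 * p * ν)

section RightAction

variable {μ ν : ℝ} {f g : ℝ × ℝ → ℂ} {Φ Ψ : ℤ → ℝ × ℝ → ℂ}

theorem rAct_apply (μ ν : ℝ) (f : ℝ × ℝ → ℂ) (Φ : ℤ → ℝ × ℝ → ℂ) (q : ℝ × ℝ) :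
    rAct μ ν f Φ q = ∑ᶠ p, f (shift μ ν p q) * starRingEnd ℂ (Φ p (shift μ ν p q)) := rfl

theorem support_rAct_term_subset (μ ν : ℝ) (f : ℝ × ℝ → ℂ) (Φ : ℤ → ℝ × ℝ → ℂ) (q : ℝ × ℝ) :
    (support fun p ↦ f (shift μ ν p q) * starRingEnd ℂ (Φ p (shift μ ν p q))) ⊆ support Φ :=
  support_subset_iff'.2 fun p hp ↦ by simp [notMem_support.1 hp]

theorem rAct_apply_eq_sum {s : Finset ℤ} (hs : support Φ ⊆ s) (f : ℝ × ℝ → ℂ) (q : ℝ × ℝ) :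
    rAct μ ν f Φ q = ∑ p ∈ s, f (shift μ ν p q) * starRingEnd ℂ (Φ p (shift μ ν p q)) :=
  finsum_eq_sum_of_support_subset _ ((support_rAct_term_subset μ ν f Φ q).trans hs)

theorem rAct_neg_left (μ ν : ℝ) (f : ℝ × ℝ → ℂ) (Φ : ℤ → ℝ × ℝ → ℂ) :
    rAct μ ν (-f) Φ = -rAct μ ν f Φ := by
  ext q
  simp only [rAct_apply, Pi.neg_apply, neg_mul, finsum_neg_distrib]

theorem rAct_add_left (hΦ : (support Φ).Finite) :
    rAct μ ν (f + g) Φ = rAct μ ν f Φ + rAct μ ν g Φ := by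
  ext q
  simp only [rAct_apply, Pi.add_apply, add_mul]
  exact finsum_add_distrib (hΦ.subset (support_rAct_term_subset μ ν f Φ q))
    (hΦ.subset (support_rAct_term_subset μ ν g Φ q))

theorem rAct_sub_right (hΦ : (support Φ).Finite) (hΨ : (support Ψ).Finite) :
    rAct μ ν f (Φ - Ψ) = rAct μ ν f Φ - rAct μ ν f Ψ := by
  ext q
  simp only [rAct_apply, Pi.sub_apply, map_sub, mul_sub]
  exact finsum_sub_distrib (hΦ.subset (support_rAct_term_subset μ ν f Φ q))
    (hΨ.subset (support_rAct_term_subset μ ν f Ψ q))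

theorem mul_rAct_of_eq_shift_add_conj {m : ℝ × ℝ → ℂ} {θ : ℤ → ℝ × ℝ → ℂ}
    (hm : ∀ p q, m q = m (shift μ ν p q) + starRingEnd ℂ (θ p (shift μ ν p q)))
    (hΦ : (support Φ).Finite) :
    m * rAct μ ν f Φ = rAct μ ν (m * f) Φ + rAct μ ν f (θ * Φ) := by
  have mul_finite : (support (θ * Φ)).Finite := hΦ.subset (support_mul_subset_right θ Φ)
  ext q
  rw [Pi.mul_apply, Pi.add_apply, rAct_apply, rAct_apply, rAct_apply, mul_finsum,
    ← finsum_add_distrib (hΦ.subset (support_rAct_term_subset μ ν (m * f) Φ q))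
      (mul_finite.subset (support_rAct_term_subset μ ν f (θ * Φ) q))]
  refine finsum_congr fun p ↦ ?_
  rw [hm p q, Pi.mul_apply, Pi.mul_apply, Pi.mul_apply, map_mul]
  ring

theorem pdY_rAct (hf : ∀ x, Differentiable ℝ fun y ↦ f (x, y))
    (hΦ : ∀ p x, Differentiable ℝ fun y ↦ Φ p (x, y)) (hfin : (support Φ).Finite) :
    uncurry (pdY (rAct μ ν f Φ)) =
      rAct μ ν (uncurry (pdY f)) Φ + rAct μ ν f (fun p ↦ uncurry (pdY (Φ p))) := by
  have hs : support Φ ⊆ hfin.toFinset := hfin.coe_toFinset.ge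
  ext ⟨x, y⟩
  rw [Pi.add_apply, rAct_apply_eq_sum hs, rAct_apply_eq_sum ((support_pdY_subset Φ).trans hs),
    ← Finset.sum_add_distrib]
  change deriv (fun t ↦ rAct μ ν f Φ (x, t)) y = _
  simp only [rAct_apply_eq_sum hs]
  exact HasDerivAt.deriv <| HasDerivAt.fun_sum fun p _ ↦
    (hasDerivAt_comp_shift hf μ ν p x y).mul (hasDerivAt_comp_shift (hΦ p) μ ν p x y).star

end RightAction

theorem statement3_general (c : ℕ) {μ : ℝ} (hμ : μ ≠ 0) (ν : ℝ) {f : ℝ × ℝ → ℂ}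
    (hf : ∀ x, Differentiable ℝ fun y ↦ f (x, y)) {Φ : ℤ → ℝ × ℝ → ℂ}
    (hΦ : ∀ p x, Differentiable ℝ fun y ↦ Φ p (x, y)) (hfin : (support Φ).Finite) :
    n1X c μ ν (rAct μ ν f Φ) = rAct μ ν (n1X c μ ν f) Φ + rAct μ ν f (dAlgX c μ Φ) := by
  have potential_mul : connPotential c μ ν * rAct μ ν f Φ =
      rAct μ ν (connPotential c μ ν * f) Φ + rAct μ ν f (derivMultiplier c μ * Φ) :=
    mul_rAct_of_eq_shift_add_conj (connPotential_eq_shift_add_conj c hμ ν) hfin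
  have multiplier_finite : (support (derivMultiplier c μ * Φ)).Finite :=
    hfin.subset (support_mul_subset_right _ Φ)
  rw [n1X_eq_neg_pdY_add_mul, n1X_eq_neg_pdY_add_mul, dAlgX_eq_mul_sub_pdY,
    pdY_rAct hf hΦ hfin, potential_mul, rAct_add_left hfin, rAct_neg_left,
    rAct_sub_right multiplier_finite (hfin.subset (support_pdY_subset Φ))]
  abel

/-- part of Theorem 3.4, Leibniz rule for `∇¹_X`: assuming `ν ≠ 0`, for every
module function `f` and every smooth algebra element `Φ`,
`∇¹_X(f·Φ) = (∇¹_X f)·Φ + f·(δ_X Φ)` as functions on `ℝ × ℝ`.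
(Here `∇¹_Y = ∇⁰_Y` and `∇¹_Z = ∇⁰_Z`.) -/
theorem statement3 (c : ℕ) (hc : 0 < c) (μ ν : ℝ) (hμ : μ ≠ 0) (hν : ν ≠ 0)
    (f : ℝ × ℝ → ℂ) (hf : IsModuleFn f)
    (Φ : ℤ → ℝ × ℝ → ℂ) (hΦ : IsAlgElem c ν Φ) :
    n1X c μ ν (rAct μ ν f Φ) = rAct μ ν (n1X c μ ν f) Φ + rAct μ ν f (dAlgX c μ Φ) := by
  have f_differentiable : Differentiable ℝ f := hf.1.differentiable (by simp)
  have Φ_differentiable (p : ℤ) : Differentiable ℝ (Φ p) := (hΦ.1 p).differentiable (by simp)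
  exact statement3_general c hμ ν (by fun_prop) (by fun_prop) hΦ.2.2.1

end
end

section
/- Compatibility of the connection ∇¹ with the D-valued inner product (part of Theorem 3.4): assume ν ≠ 0. For all module functions f, g and every (x, y, p) ∈ ℝ × ℝ × ℤ, ⟨∇¹_X f, g⟩(x,y,p) + ⟨f, ∇¹_X g⟩(x,y,p) = 2πicp(x−pμ)·⟨f,g⟩(x,y,p) − ∂/∂y[⟨f,g⟩(x,y,p)]. -/
noncomputable section

/-!
Write `∇¹_X = -∂_y + i a` with the real potential `a(x,y) = πc/(2μ)·x² - νx + μy`. In the `k`-th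
summand of `⟨∇¹_X f, g⟩ + ⟨f, ∇¹_X g⟩` the two derivatives combine by the Leibniz rule to minus the
`y`-derivative of the summand of `⟨f, g⟩`, up to the derivative `-2πickp` of the phase, while the
potentials contribute `i` times the difference of `a` between `(x+k, y)` and its translate by
`-(2pμ, 2pν)`. The linear part of `a` is invariant under that translation and the quadratic part
changes by `2πcp(x+k-pμ)`, so that the two terms in `k` cancel and every summand carries the same
factor `2πicp(x-pμ)`.
-/

open Complex

theorem hasDerivAt_finsum {ι 𝕜 E : Type*} [NontriviallyNormedField 𝕜] [NormedAddCommGroup E]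
    [NormedSpace 𝕜 E] {u : ι → 𝕜 → E} {u' : ι → E} {y : 𝕜} (hfin : {k | u k ≠ 0}.Finite)
    (hu : ∀ k, HasDerivAt (u k) (u' k) y) :
    HasDerivAt (fun t => ∑ᶠ k, u k t) (∑ᶠ k, u' k) y := by
  have support_apply (t : 𝕜) : (Function.support fun k => u k t) ⊆ hfin.toFinset := fun k hk =>
    hfin.mem_toFinset.2 fun h => hk (congrFun h t)
  have support_deriv : Function.support u' ⊆ hfin.toFinset := fun k hk =>
    hfin.mem_toFinset.2 fun h => hk ((h ▸ hu k).unique (hasDerivAt_const y 0))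
  simp only [finsum_eq_sum_of_support_subset _ (support_apply _),
    finsum_eq_sum_of_support_subset _ support_deriv]
  exact HasDerivAt.fun_sum fun k _ => hu k

theorem hasDerivAt_e2_comp {u : ℝ → ℝ} {u' y : ℝ} (hu : HasDerivAt u u' y) :
    HasDerivAt (fun t => e2 (u t)) (2 * Real.pi * I * u' * e2 (u y)) y := by
  simpa only [e2, mul_comm] using (hu.ofReal_comp.const_mul (2 * Real.pi * I)).cexp

theorem finite_setOf_add_intCast_mem {K : Set ℝ} (hK : IsCompact K) (x : ℝ) :
    {k : ℤ | x + k ∈ K}.Finite :=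
  (((Homeomorph.addLeft x).isClosedEmbedding.comp
    Int.isClosedEmbedding_coe_real).isCompact_preimage hK).finite_of_discrete

namespace IsModuleFn

variable {f : ℝ × ℝ → ℂ}

theorem differentiable_snd (hf : IsModuleFn f) (x : ℝ) : Differentiable ℝ fun t => f (x, t) :=
  (hf.1.differentiable (by simp)).comp (by fun_prop)

theorem finite_setOf_exists_ne_zero (hf : IsModuleFn f) (x : ℝ) :
    {k : ℤ | ∃ t, f (x + k, t) ≠ 0}.Finite := by
  obtain ⟨-, -, K, hK, hfK⟩ := hf
  exact (finite_setOf_add_intCast_mem hK x).subset fun k ⟨t, ht⟩ =>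
    not_imp_comm.1 (hfK (x + k) t) ht

end IsModuleFn

/-- The real potential `a` of the connection, in the sense that `∇¹_X = -∂_y + i a`. -/
def n1Potential (c : ℕ) (μ ν x y : ℝ) : ℝ :=
  Real.pi * c / (2 * μ) * x ^ 2 - ν * x + μ * y

/-- The `k`-th summand of the inner product `⟨f,g⟩(x,y,p)`, where `q = (x,y)`. -/
def ipSummand (c : ℕ) (μ ν : ℝ) (f g : ℝ × ℝ → ℂ) (p k : ℤ) (q : ℝ × ℝ) : ℂ :=
  e2 (-((c : ℝ) * k * p * (q.2 - p * ν))) * f (q.1 + k, q.2) *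
    (starRingEnd ℂ) (g (q.1 - 2 * p * μ + k, q.2 - 2 * p * ν))

section

variable (c : ℕ) {μ : ℝ} (ν : ℝ) {f g : ℝ × ℝ → ℂ} (p k : ℤ) (x y : ℝ)

theorem n1Potential_sub_translate (hμ : μ ≠ 0) (s : ℝ) :
    n1Potential c μ ν x y - n1Potential c μ ν (x - 2 * s * μ) (y - 2 * s * ν) =
      2 * Real.pi * c * s * (x - s * μ) := by
  unfold n1Potential
  field_simp
  ring

variable (μ) in
theorem n1X_apply (f : ℝ × ℝ → ℂ) :
    n1X c μ ν f (x, y) = -pdY f x y + I * n1Potential c μ ν x y * f (x, y) := by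
  simp only [n1X, n1Potential]
  push_cast
  ring

variable (μ) in
theorem exists_ne_zero_of_n1X_ne_zero (h : n1X c μ ν f (x, y) ≠ 0) : ∃ t, f (x, t) ≠ 0 := by
  contrapose! h
  simp [n1X, pdY, h]

variable (μ) in
theorem ipD_eq_finsum_ipSummand (f g : ℝ × ℝ → ℂ) :
    ipD c μ ν f g p (x, y) = ∑ᶠ k, ipSummand c μ ν f g p k (x, y) :=
  rfl

variable (μ g) in
theorem left_ne_zero_of_ipSummand_ne_zero (h : ipSummand c μ ν f g p k (x, y) ≠ 0) :
    f (x + k, y) ≠ 0 :=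
  right_ne_zero_of_mul (left_ne_zero_of_mul h)

variable (μ) in
theorem hasDerivAt_ipSummand (hf : ∀ x, Differentiable ℝ fun t => f (x, t))
    (hg : ∀ x, Differentiable ℝ fun t => g (x, t)) :
    HasDerivAt (fun t => ipSummand c μ ν f g p k (x, t))
      (ipSummand c μ ν (fun q => pdY f q.1 q.2) g p k (x, y) +
        ipSummand c μ ν f (fun q => pdY g q.1 q.2) p k (x, y) -
        2 * Real.pi * I * c * k * p * ipSummand c μ ν f g p k (x, y)) y := by
  have phase_deriv : HasDerivAt (fun t : ℝ => -((c : ℝ) * k * p * (t - p * ν)))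
      (-((c : ℝ) * k * p)) y := by
    simpa only [id, mul_one] using
      (((hasDerivAt_id y).sub_const (p * ν)).const_mul ((c : ℝ) * k * p)).fun_neg
  have left_deriv := (hf (x + k) y).hasDerivAt
  have right_deriv := ((hg (x - 2 * p * μ + k) (y - 2 * p * ν)).hasDerivAt.comp_sub_const
    y (2 * p * ν)).star
  refine (((hasDerivAt_e2_comp phase_deriv).fun_mul left_deriv).fun_mul right_deriv).congr_deriv ?_
  simp only [ipSummand, pdY, starRingEnd_apply]
  push_cast
  ring

theorem ipSummand_n1X_add_ipSummand_n1X (hμ : μ ≠ 0) (f g : ℝ × ℝ → ℂ) :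
    ipSummand c μ ν (n1X c μ ν f) g p k (x, y) + ipSummand c μ ν f (n1X c μ ν g) p k (x, y) =
      2 * Real.pi * I * c * p * (x + k - p * μ) * ipSummand c μ ν f g p k (x, y) -
        (ipSummand c μ ν (fun q => pdY f q.1 q.2) g p k (x, y) +
          ipSummand c μ ν f (fun q => pdY g q.1 q.2) p k (x, y)) := by
  have potential_diff : (n1Potential c μ ν (x + k) y : ℂ) -
      n1Potential c μ ν (x - 2 * p * μ + k) (y - 2 * p * ν) =
        2 * Real.pi * c * p * (x + k - p * μ) := by
    rw [sub_add_eq_add_sub]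
    exact_mod_cast n1Potential_sub_translate c ν (x + k) y hμ p
  simp only [ipSummand, n1X_apply, map_add, map_mul, map_neg, conj_ofReal, conj_I]
  linear_combination I * e2 (-((c : ℝ) * k * p * (y - p * ν))) * f (x + k, y) *
    (starRingEnd ℂ) (g (x - 2 * p * μ + k, y - 2 * p * ν)) * potential_diff

theorem hasDerivAt_ipSummand_n1X (hμ : μ ≠ 0) (hf : ∀ x, Differentiable ℝ fun t => f (x, t))
    (hg : ∀ x, Differentiable ℝ fun t => g (x, t)) :
    HasDerivAt (fun t => ipSummand c μ ν f g p k (x, t))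
      (2 * Real.pi * I * c * p * (x - p * μ) * ipSummand c μ ν f g p k (x, y) -
        (ipSummand c μ ν (n1X c μ ν f) g p k (x, y) +
          ipSummand c μ ν f (n1X c μ ν g) p k (x, y))) y := by
  refine (hasDerivAt_ipSummand c μ ν p k x y hf hg).congr_deriv ?_
  rw [ipSummand_n1X_add_ipSummand_n1X c ν p k x y hμ]
  ring

theorem hasDerivAt_ipD (hμ : μ ≠ 0) (hf : ∀ x, Differentiable ℝ fun t => f (x, t))
    (hg : ∀ x, Differentiable ℝ fun t => g (x, t))
    (hfin : {k : ℤ | ∃ t, f (x + k, t) ≠ 0}.Finite) :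
    HasDerivAt (fun t => ipD c μ ν f g p (x, t))
      (2 * Real.pi * I * c * p * (x - p * μ) * ipD c μ ν f g p (x, y) -
        (ipD c μ ν (n1X c μ ν f) g p (x, y) + ipD c μ ν f (n1X c μ ν g) p (x, y))) y := by
  have finite_support (h : ℝ × ℝ → ℂ) :
      (Function.support fun k => ipSummand c μ ν f h p k (x, y)).Finite :=
    hfin.subset fun k hk => ⟨y, left_ne_zero_of_ipSummand_ne_zero c μ ν h p k x y hk⟩
  have finite_support_n1X :
      (Function.support fun k => ipSummand c μ ν (n1X c μ ν f) g p k (x, y)).Finite :=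
    hfin.subset fun k hk => exists_ne_zero_of_n1X_ne_zero c μ ν (x + k) y
      (left_ne_zero_of_ipSummand_ne_zero c μ ν g p k x y hk)
  have finite_summands : {k | (fun t => ipSummand c μ ν f g p k (x, t)) ≠ 0}.Finite :=
    hfin.subset fun k hk => (Function.ne_iff.1 hk).imp fun t =>
      left_ne_zero_of_ipSummand_ne_zero c μ ν g p k x t
  simp only [ipD_eq_finsum_ipSummand]
  refine (hasDerivAt_finsum finite_summands
    fun k => hasDerivAt_ipSummand_n1X c ν p k x y hμ hf hg).congr_deriv ?_
  rw [finsum_sub_distrib ((finite_support g).subset (Function.support_mul_subset_right _ _))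
      ((finite_support_n1X.union (finite_support _)).subset (Function.support_add _ _)),
    finsum_add_distrib finite_support_n1X (finite_support _), ← mul_finsum]

theorem statement4_general (hμ : μ ≠ 0) (hf : ∀ x, Differentiable ℝ fun t => f (x, t))
    (hg : ∀ x, Differentiable ℝ fun t => g (x, t))
    (hfin : {k : ℤ | ∃ t, f (x + k, t) ≠ 0}.Finite) :
    ipD c μ ν (n1X c μ ν f) g p (x, y) + ipD c μ ν f (n1X c μ ν g) p (x, y) =
      2 * Real.pi * I * c * p * (x - p * μ) * ipD c μ ν f g p (x, y) -
        pdY (ipD c μ ν f g p) x y := by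
  rw [pdY, (hasDerivAt_ipD c ν p x y hμ hf hg hfin).deriv, sub_sub_cancel]

end

/-- part of Theorem 3.4, compatibility of `∇¹_X` with `⟨·,·⟩_R^D`: assuming
`ν ≠ 0`, for all module functions `f, g` and every `(x, y, p)`,
`⟨∇¹_X f, g⟩(x,y,p) + ⟨f, ∇¹_X g⟩(x,y,p) = 2πicp(x−pμ)·⟨f,g⟩(x,y,p) − ∂/∂y[⟨f,g⟩(x,y,p)]`. -/
theorem statement4 (c : ℕ) (hc : 0 < c) (μ ν : ℝ) (hμ : μ ≠ 0) (hν : ν ≠ 0)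
    (f g : ℝ × ℝ → ℂ) (hf : IsModuleFn f) (hg : IsModuleFn g) :
    ∀ (x y : ℝ) (p : ℤ),
      ipD c μ ν (n1X c μ ν f) g p (x, y) + ipD c μ ν f (n1X c μ ν g) p (x, y) =
        2 * (Real.pi : ℂ) * Complex.I * (c : ℂ) * (p : ℂ) * ((x : ℂ) - (p : ℂ) * (μ : ℂ)) *
          ipD c μ ν f g p (x, y) - pdY (ipD c μ ν f g p) x y :=
  fun x y p => statement4_general c ν p x y hμ hf.differentiable_snd hg.differentiable_snd
    (hf.finite_setOf_exists_ne_zero x)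

end
end

section
/- Constant curvature of the connection ∇¹ (part of Theorem 3.4): assume ν ≠ 0. For every module function f, (∇¹_X ∇¹_Y − ∇¹_Y ∇¹_X − c·∇¹_Z) f = −νi·f, (∇¹_X ∇¹_Z − ∇¹_Z ∇¹_X) f = 0, and (∇¹_Y ∇¹_Z − ∇¹_Z ∇¹_Y) f = −(πi/μ)·f. (As elements of E^c_{μν}, the curvature is Θ_{∇¹}(X,Y) = νi·Id_E, Θ_{∇¹}(X,Z) = 0, Θ_{∇¹}(Y,Z) = (πi/μ)·Id_E.) -/
noncomputable section

/-!
Each of `∇¹_X`, `∇¹_Y`, `∇¹_Z` has the form `-∂_v + a` for a direction `v` (zero for `Z`) and a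
multiplication operator `a`. In a commutator of two such operators the second-order terms cancel
by symmetry of second derivatives, and the terms `-(a ∂_w + b ∂_v) + a b` are symmetric in the two
operators; only the derivatives of the coefficients survive, so `[-∂_v + a, -∂_w + b]` is
multiplication by `∂_w a - ∂_v b`.
-/

section CovDeriv

variable {𝕜 E F R : Type*} [NontriviallyNormedField 𝕜] [NormedAddCommGroup E] [NormedSpace 𝕜 E]
  [NormedAddCommGroup F] [NormedSpace 𝕜 F]

theorem hasFDerivAt_lineDeriv {f : E → F} {q : E} (hf : ContDiffAt 𝕜 2 f q) (v : E) :
    HasFDerivAt (fun p => lineDeriv 𝕜 f p v) ((fderiv 𝕜 (fderiv 𝕜 f) q).flip v) q := by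
  have hfderiv : HasFDerivAt (fderiv 𝕜 f) (fderiv 𝕜 (fderiv 𝕜 f) q) q :=
    ((hf.fderiv_right (m := 1) (by norm_num)).differentiableAt one_ne_zero).hasFDerivAt
  have hline : (fun p => lineDeriv 𝕜 f p v) =ᶠ[nhds q] fun p => fderiv 𝕜 f p v := by
    filter_upwards [hf.eventually (by simp)] with p hp
    exact (hp.differentiableAt two_ne_zero).lineDeriv_eq_fderiv
  refine HasFDerivAt.congr_of_eventuallyEq ?_ hline
  simpa using hfderiv.clm_apply (hasFDerivAt_const v q)

theorem lineDeriv_lineDeriv_comm {f : E → F} {q : E}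
    (hf : ContDiffAt 𝕜 (minSmoothness 𝕜 2) f q) (v w : E) :
    lineDeriv 𝕜 (fun p => lineDeriv 𝕜 f p w) q v =
      lineDeriv 𝕜 (fun p => lineDeriv 𝕜 f p v) q w := by
  have hf₂ : ContDiffAt 𝕜 2 f q := hf.of_le le_minSmoothness
  rw [((hasFDerivAt_lineDeriv hf₂ w).hasLineDerivAt v).lineDeriv,
    ((hasFDerivAt_lineDeriv hf₂ v).hasLineDerivAt w).lineDeriv]
  exact hf.isSymmSndFDerivAt le_rfl v w

variable [NormedCommRing R] [Module R F]

variable (𝕜) in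
/-- The covariant derivative `-∂_v + a` in the direction `v`, acting on sections of the trivial
bundle with fibre `F`; `a` is the value of the connection form on `v`. The derivative carries a
minus sign, as it does in `n1X` and `n0Y`. -/
def covDeriv (v : E) (a : E → R) (f : E → F) : E → F :=
  fun q => -lineDeriv 𝕜 f q v + a q • f q

variable [NormedAlgebra 𝕜 R] [IsBoundedSMul R F] [IsScalarTower 𝕜 R F]

theorem lineDeriv_covDeriv {a : E → R} {f : E → F} {q : E} (ha : DifferentiableAt 𝕜 a q)
    (hf : ContDiffAt 𝕜 2 f q) (v w : E) :
    lineDeriv 𝕜 (covDeriv 𝕜 v a f) q w =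
      -lineDeriv 𝕜 (fun p => lineDeriv 𝕜 f p v) q w +
        (a q • lineDeriv 𝕜 f q w + lineDeriv 𝕜 a q w • f q) := by
  have hfq : DifferentiableAt 𝕜 f q := hf.differentiableAt two_ne_zero
  have hline := hasFDerivAt_lineDeriv hf v
  have hcov := hline.neg.add (ha.hasFDerivAt.smul hfq.hasFDerivAt)
  rw [(hline.hasLineDerivAt w).lineDeriv, ha.lineDeriv_eq_fderiv, hfq.lineDeriv_eq_fderiv]
  exact (hcov.hasLineDerivAt w).lineDeriv

theorem covDeriv_covDeriv {b : E → R} {f : E → F} {q : E} (hb : DifferentiableAt 𝕜 b q)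
    (hf : ContDiffAt 𝕜 2 f q) (v w : E) (a : E → R) :
    covDeriv 𝕜 v a (covDeriv 𝕜 w b f) q =
      lineDeriv 𝕜 (fun p => lineDeriv 𝕜 f p w) q v
        - (a q • lineDeriv 𝕜 f q w + b q • lineDeriv 𝕜 f q v)
        + (a q * b q) • f q - lineDeriv 𝕜 b q v • f q := by
  rw [covDeriv, lineDeriv_covDeriv hb hf, covDeriv, smul_add, smul_neg, smul_smul]
  abel

theorem covDeriv_commutator {a b : E → R} {f : E → F} {q : E} (ha : DifferentiableAt 𝕜 a q)
    (hb : DifferentiableAt 𝕜 b q) (hf : ContDiffAt 𝕜 (minSmoothness 𝕜 2) f q) (v w : E) :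
    covDeriv 𝕜 v a (covDeriv 𝕜 w b f) q - covDeriv 𝕜 w b (covDeriv 𝕜 v a f) q =
      (lineDeriv 𝕜 a q w - lineDeriv 𝕜 b q v) • f q := by
  have hf₂ : ContDiffAt 𝕜 2 f q := hf.of_le le_minSmoothness
  rw [covDeriv_covDeriv hb hf₂, covDeriv_covDeriv ha hf₂, lineDeriv_lineDeriv_comm hf v w,
    mul_comm (b q), sub_smul]
  abel

end CovDeriv

theorem lineDeriv_eq_pdX (f : ℝ × ℝ → ℂ) (q : ℝ × ℝ) :
    lineDeriv ℝ f q (1, 0) = pdX f q.1 q.2 := by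
  obtain ⟨x, y⟩ := q
  simpa [lineDeriv, pdX] using deriv_comp_const_add (fun t => f (t, y)) x 0

theorem lineDeriv_eq_pdY (f : ℝ × ℝ → ℂ) (q : ℝ × ℝ) :
    lineDeriv ℝ f q (0, 1) = pdY f q.1 q.2 := by
  obtain ⟨x, y⟩ := q
  simpa [lineDeriv, pdY] using deriv_comp_const_add (fun t => f (x, t)) y 0

/-- The multiplication operator in `∇¹_X`, i.e. the connection form of `∇¹` evaluated on `X`. -/
def connFormX (c : ℕ) (μ ν : ℝ) (q : ℝ × ℝ) : ℂ :=
  (Real.pi : ℂ) * c * Complex.I / (2 * μ) * (q.1 : ℂ) ^ 2 - ν * Complex.I * q.1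
    + μ * Complex.I * q.2

/-- The multiplication operator `∇¹_Z`, i.e. the connection form of `∇¹` evaluated on `Z`. -/
def connFormZ (μ : ℝ) (q : ℝ × ℝ) : ℂ :=
  (Real.pi : ℂ) * Complex.I * q.1 / μ

theorem n1X_eq_covDeriv (c : ℕ) (μ ν : ℝ) (f : ℝ × ℝ → ℂ) :
    n1X c μ ν f = covDeriv ℝ (0, 1) (connFormX c μ ν) f := by
  ext q
  simp only [n1X, covDeriv, connFormX, lineDeriv_eq_pdY, smul_eq_mul]

theorem n0Y_eq_covDeriv (f : ℝ × ℝ → ℂ) : n0Y f = covDeriv ℝ (1, 0) (0 : ℝ × ℝ → ℂ) f := by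
  ext q
  simp only [n0Y, covDeriv, lineDeriv_eq_pdX, Pi.zero_apply, zero_smul, add_zero]

theorem n0Z_eq_covDeriv (μ : ℝ) (f : ℝ × ℝ → ℂ) : n0Z μ f = covDeriv ℝ 0 (connFormZ μ) f := by
  ext q
  simp only [n0Z, covDeriv, connFormZ, lineDeriv_zero, neg_zero, zero_add, smul_eq_mul]

theorem differentiable_connFormX (c : ℕ) (μ ν : ℝ) : Differentiable ℝ (connFormX c μ ν) := by
  have := Complex.differentiable_ofReal
  unfold connFormX
  fun_prop

theorem differentiable_connFormZ (μ : ℝ) : Differentiable ℝ (connFormZ μ) := by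
  have := Complex.differentiable_ofReal
  unfold connFormZ
  fun_prop

theorem pdX_connFormX (c : ℕ) {μ : ℝ} (hμ : μ ≠ 0) (ν x y : ℝ) :
    pdX (connFormX c μ ν) x y = c * connFormZ μ (x, y) - ν * Complex.I := by
  have hid : HasDerivAt (fun t : ℝ => (t : ℂ)) 1 x := (hasDerivAt_id x).ofReal_comp
  have hquad := (((hid.fun_pow 2).const_mul ((Real.pi : ℂ) * c * Complex.I / (2 * μ))).fun_sub
    (hid.const_mul (ν * Complex.I))).add_const (μ * Complex.I * y)
  have hμ' : (μ : ℂ) ≠ 0 := Complex.ofReal_ne_zero.mpr hμ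
  refine hquad.deriv.trans ?_
  simp only [connFormZ]
  field_simp
  push_cast
  ring

theorem pdX_connFormZ (μ x y : ℝ) :
    pdX (connFormZ μ) x y = Real.pi * Complex.I / μ := by
  have hid : HasDerivAt (fun t : ℝ => (t : ℂ)) 1 x := (hasDerivAt_id x).ofReal_comp
  have hlin := (hid.const_mul ((Real.pi : ℂ) * Complex.I)).div_const (μ : ℂ)
  exact hlin.deriv.trans (by rw [mul_one])

theorem pdY_connFormZ (μ x y : ℝ) : pdY (connFormZ μ) x y = 0 :=
  deriv_const y (connFormZ μ (x, y))

theorem statement5_general (c : ℕ) {μ : ℝ} (hμ : μ ≠ 0) (ν : ℝ) {f : ℝ × ℝ → ℂ}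
    (hf : ContDiff ℝ 2 f) :
    (∀ q : ℝ × ℝ, n1X c μ ν (n0Y f) q - n0Y (n1X c μ ν f) q - (c : ℂ) * n0Z μ f q
      = -(ν : ℂ) * Complex.I * f q) ∧
    (∀ q : ℝ × ℝ, n1X c μ ν (n0Z μ f) q - n0Z μ (n1X c μ ν f) q = 0) ∧
    (∀ q : ℝ × ℝ, n0Y (n0Z μ f) q - n0Z μ (n0Y f) q
      = -((Real.pi : ℂ) * Complex.I / (μ : ℂ)) * f q) := by
  have hX := differentiable_connFormX c μ ν
  have hY : Differentiable ℝ (0 : ℝ × ℝ → ℂ) := differentiable_const 0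
  have hZ := differentiable_connFormZ μ
  have hf₂ (q : ℝ × ℝ) : ContDiffAt ℝ (minSmoothness ℝ 2) f q := by simpa using hf.contDiffAt
  refine ⟨fun q => ?_, fun q => ?_, fun q => ?_⟩
  · have hdY : lineDeriv ℝ (0 : ℝ × ℝ → ℂ) q (0, 1) = 0 := deriv_const 0 0
    simp only [n1X_eq_covDeriv, n0Y_eq_covDeriv]
    rw [covDeriv_commutator (hX q) (hY q) (hf₂ q), hdY, lineDeriv_eq_pdX, pdX_connFormX c hμ,
      smul_eq_mul, n0Z, connFormZ]
    ring
  · simp only [n1X_eq_covDeriv, n0Z_eq_covDeriv]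
    rw [covDeriv_commutator (hX q) (hZ q) (hf₂ q), lineDeriv_zero, lineDeriv_eq_pdY,
      pdY_connFormZ, sub_zero, zero_smul]
  · simp only [n0Y_eq_covDeriv, n0Z_eq_covDeriv]
    rw [covDeriv_commutator (hY q) (hZ q) (hf₂ q), lineDeriv_zero, lineDeriv_eq_pdX,
      pdX_connFormZ, zero_sub, smul_eq_mul]

/-- part of Theorem 3.4, constant curvature of `∇¹`: assuming `ν ≠ 0`, for
every module function `f`, `(∇¹_X∇¹_Y − ∇¹_Y∇¹_X − c·∇¹_Z) f = −νi·f`,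
`(∇¹_X∇¹_Z − ∇¹_Z∇¹_X) f = 0`, and `(∇¹_Y∇¹_Z − ∇¹_Z∇¹_Y) f = −(πi/μ)·f`.
(Here `∇¹_Y = ∇⁰_Y` and `∇¹_Z = ∇⁰_Z`.) -/
theorem statement5 (c : ℕ) (hc : 0 < c) (μ ν : ℝ) (hμ : μ ≠ 0) (hν : ν ≠ 0)
    (f : ℝ × ℝ → ℂ) (hf : IsModuleFn f) :
    (∀ q : ℝ × ℝ, n1X c μ ν (n0Y f) q - n0Y (n1X c μ ν f) q - (c : ℂ) * n0Z μ f q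
      = -(ν : ℂ) * Complex.I * f q) ∧
    (∀ q : ℝ × ℝ, n1X c μ ν (n0Z μ f) q - n0Z μ (n1X c μ ν f) q = 0) ∧
    (∀ q : ℝ × ℝ, n0Y (n0Z μ f) q - n0Z μ (n0Y f) q
      = -((Real.pi : ℂ) * Complex.I / (μ : ℂ)) * f q) :=
  statement5_general c hμ ν (hf.1.of_le (WithTop.coe_le_coe.2 le_top))

end
end

section
/- Criticality criterion for constant-curvature connections (Theorem 'thm:critical-ioi', operator form): let V be the complex vector space of module functions and let ∇_X, ∇_Y, ∇_Z : V → V be linear maps with constant curvature, meaning there exist real numbers θ₁, θ₂, θ₃ with ∇_X∇_Y − ∇_Y∇_X − c·∇_Z = θ₁·i·id_V, ∇_X∇_Z − ∇_Z∇_X = θ₂·i·id_V, and ∇_Y∇_Z − ∇_Z∇_Y = θ₃·i·id_V. Set Θ(X,Y) = θ₁·i·id_V, Θ(X,Z) = θ₂·i·id_V, Θ(Y,Z) = θ₃·i·id_V and Θ(W',W) = −Θ(W,W'). Then the three Yang–Mills critical-point equations (1) [∇_Y, Θ(X,Y)] + [∇_Z, Θ(X,Z)] = 0, (2) [∇_X,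 Θ(Y,X)] + [∇_Z, Θ(Y,Z)] = 0, (3) [∇_X, Θ(Z,X)] + [∇_Y, Θ(Z,Y)] − c·Θ(X,Y) = 0 all hold if and only if θ₁ = 0. -/
noncomputable section

/-- The complex vector space of module functions, as a submodule of `ℝ × ℝ → ℂ`. -/
def moduleFnSub : Submodule ℂ (ℝ × ℝ → ℂ) where
  carrier := {f | IsModuleFn f}
  add_mem' := by
    rintro f g ⟨hf1, hf2, K1, hK1, hK1'⟩ ⟨hg1, hg2, K2, hK2, hK2'⟩
    refine ⟨hf1.add hg1, fun x y => ?_, K1 ∪ K2, hK1.union hK2, fun x y hx => ?_⟩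
    · simp only [Pi.add_apply, hf2 x y, hg2 x y]
    · simp only [Set.mem_union, not_or] at hx
      simp only [Pi.add_apply, hK1' x y hx.1, hK2' x y hx.2, add_zero]
  zero_mem' := ⟨contDiff_const, fun _ _ => rfl, ∅, isCompact_empty, fun _ _ _ => rfl⟩
  smul_mem' := by
    rintro a f ⟨hf1, hf2, K, hK, hK'⟩
    refine ⟨hf1.const_smul a, fun x y => ?_, K, hK, fun x y hx => ?_⟩
    · simp only [Pi.smul_apply, hf2 x y]
    · simp only [Pi.smul_apply, hK' x y hx, smul_zero]

/-- The curvature value `θ·i·id_V` as a linear operator on the space of module functions. -/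
noncomputable def thetaOp (θ : ℝ) : moduleFnSub →ₗ[ℂ] moduleFnSub :=
  ((θ : ℂ) * Complex.I) • LinearMap.id

/-- Commutator of linear operators. -/
def commOp {V : Type*} [AddCommGroup V] [Module ℂ V] (A B : V →ₗ[ℂ] V) : V →ₗ[ℂ] V :=
  A ∘ₗ B - B ∘ₗ A

/-!
A constant curvature operator is a scalar multiple of the identity, hence central, so every
commutator in the Yang–Mills equations vanishes. All that survives is the term `c · Θ(X, Y)` of the
third equation, coming from the structure constant of `[X, Y] = cZ`. Since the space of module
functions is nonzero, this term vanishes exactly when the scalar `Θ(X, Y)` does.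
-/

section YangMills

variable {R A : Type*} [CommRing R] [Ring A] [Algebra R A]

/-- The curvature component `Θ(X, Y) = [∇_X, ∇_Y] - ∇_{[X, Y]}` of a connection along the Heisenberg
Lie algebra, where `[X, Y] = cZ`. The components of the connection are elements of an arbitrary
algebra, the motivating one being the linear operators on a module. As `Z` is central, the other two
curvature components are the commutators `⁅nX, nZ⁆` and `⁅nY, nZ⁆`. -/
def curvatureXY (c : R) (nX nY nZ : A) : A :=
  ⁅nX, nY⁆ - c • nZ

/-- Rieffel's critical-point equations of the Yang–Mills functional, for the connection with
components `nX`, `nY`, `nZ` along the Heisenberg Lie algebra, where `[X, Y] = cZ`. -/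
def IsYangMillsCritical (c : R) (nX nY nZ : A) : Prop :=
  ⁅nY, curvatureXY c nX nY nZ⁆ + ⁅nZ, ⁅nX, nZ⁆⁆ = 0 ∧
  ⁅nX, -curvatureXY c nX nY nZ⁆ + ⁅nZ, ⁅nY, nZ⁆⁆ = 0 ∧
  ⁅nX, -⁅nX, nZ⁆⁆ + ⁅nY, -⁅nY, nZ⁆⁆ - c • curvatureXY c nX nY nZ = 0

theorem lie_eq_zero_of_mem_center {z : A} (hz : z ∈ Subalgebra.center R A) (x : A) : ⁅x, z⁆ = 0 :=
  Commute.lie_eq (Subalgebra.mem_center_iff.1 hz x)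

theorem isYangMillsCritical_iff_of_curvature_mem_center {c : R} {nX nY nZ : A}
    (hXY : curvatureXY c nX nY nZ ∈ Subalgebra.center R A)
    (hXZ : ⁅nX, nZ⁆ ∈ Subalgebra.center R A) (hYZ : ⁅nY, nZ⁆ ∈ Subalgebra.center R A) :
    IsYangMillsCritical c nX nY nZ ↔ c • curvatureXY c nX nY nZ = 0 := by
  simp only [IsYangMillsCritical, lie_eq_zero_of_mem_center hXY, lie_eq_zero_of_mem_center hXZ,
    lie_eq_zero_of_mem_center hYZ, lie_eq_zero_of_mem_center (neg_mem hXY),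
    lie_eq_zero_of_mem_center (neg_mem hXZ), lie_eq_zero_of_mem_center (neg_mem hYZ),
    add_zero, zero_sub, neg_eq_zero, true_and]

theorem statement9_general [NoZeroDivisors R] [FaithfulSMul R A] {c : R} (hc : c ≠ 0)
    {nX nY nZ : A} {a₁ a₂ a₃ : R} (hXY : curvatureXY c nX nY nZ = a₁ • 1)
    (hXZ : ⁅nX, nZ⁆ = a₂ • 1) (hYZ : ⁅nY, nZ⁆ = a₃ • 1) :
    IsYangMillsCritical c nX nY nZ ↔ a₁ = 0 := by
  have smul_one_mem_center (a : R) : a • (1 : A) ∈ Subalgebra.center R A :=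
    Subalgebra.smul_mem _ (one_mem _) a
  calc IsYangMillsCritical c nX nY nZ
    _ ↔ c • curvatureXY c nX nY nZ = 0 :=
      isYangMillsCritical_iff_of_curvature_mem_center (hXY ▸ smul_one_mem_center a₁)
        (hXZ ▸ smul_one_mem_center a₂) (hYZ ▸ smul_one_mem_center a₃)
    _ ↔ algebraMap R A (c * a₁) = 0 := by rw [hXY, smul_smul, Algebra.algebraMap_eq_smul_one]
    _ ↔ a₁ = 0 := by rw [FaithfulSMul.algebraMap_eq_zero_iff, mul_eq_zero_iff_left hc]

end YangMills

theorem isModuleFn_comp_fst {φ : ℝ → ℂ} (hφ : ContDiff ℝ (⊤ : ℕ∞) φ) (hsupp : HasCompactSupport φ) :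
    IsModuleFn (φ ∘ Prod.fst) :=
  ⟨hφ.comp contDiff_fst, fun _ _ => rfl, tsupport φ, hsupp,
    fun _ _ hx => image_eq_zero_of_notMem_tsupport (f := φ) hx⟩

instance nontrivial_moduleFnSub : Nontrivial moduleFnSub := by
  let φ : ContDiffBump (0 : ℝ) := ⟨1, 2, one_pos, one_lt_two⟩
  have hφ : IsModuleFn ((Complex.ofReal ∘ φ) ∘ Prod.fst) :=
    isModuleFn_comp_fst (Complex.ofRealCLM.contDiff.comp φ.contDiff)
      (φ.hasCompactSupport.comp_left Complex.ofReal_zero)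
  have hφ_zero : φ 0 = 1 := φ.one_of_mem_closedBall (Metric.mem_closedBall_self φ.rIn_pos.le)
  refine nontrivial_of_ne ⟨_, hφ⟩ 0 fun h => ?_
  simpa [hφ_zero] using congrFun (congrArg Subtype.val h) (0, 0)

/-- Theorem `thm:critical-ioi`, operator form: linear operators
`∇_X, ∇_Y, ∇_Z` on the space `V` of module functions with constant curvature
`Θ(X,Y) = θ₁·i·id`, `Θ(X,Z) = θ₂·i·id`, `Θ(Y,Z) = θ₃·i·id` satisfy the three Yang–Mills
critical-point equations if and only if `θ₁ = 0`. -/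
theorem statement9 (c : ℕ) (hc : 0 < c) (μ ν : ℝ) (hμ : μ ≠ 0)
    (nX nY nZ : moduleFnSub →ₗ[ℂ] moduleFnSub) (θ₁ θ₂ θ₃ : ℝ)
    (hXY : nX ∘ₗ nY - nY ∘ₗ nX - (c : ℂ) • nZ = thetaOp θ₁)
    (hXZ : nX ∘ₗ nZ - nZ ∘ₗ nX = thetaOp θ₂)
    (hYZ : nY ∘ₗ nZ - nZ ∘ₗ nY = thetaOp θ₃) :
    (commOp nY (thetaOp θ₁) + commOp nZ (thetaOp θ₂) = 0 ∧
     commOp nX (-thetaOp θ₁) + commOp nZ (thetaOp θ₃) = 0 ∧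
     commOp nX (-thetaOp θ₂) + commOp nY (-thetaOp θ₃) - (c : ℂ) • thetaOp θ₁ = 0)
    ↔ θ₁ = 0 := by
  have critical_iff : IsYangMillsCritical (A := Module.End ℂ moduleFnSub) (c : ℂ) nX nY nZ ↔
      (θ₁ : ℂ) * Complex.I = 0 :=
    statement9_general (Nat.cast_ne_zero.2 hc.ne') hXY hXZ hYZ
  rw [← hXY, ← hXZ, ← hYZ]
  exact critical_iff.trans (by simp)

end
end

section
/- Yang–Mills value of the Z-perturbed connection (Theorem 'thm:min-but-nc'(b), value formula): let c be a positive integer, μ > 0, and α a nonzero real number. Then −∫₀^{2μ} ∫₀^1 [ (i·c·cos(απx/μ))² + (πi/μ − i·(απ/μ)·sin(απx/μ))² ] dy dx = c²μ + (c²μ/(4απ))·sin(4απ) + 2π²/μ + (2π/μ)·(cos(2απ) − 1) + α²π²/μ − (απ/(4μ))·sin(4απ). (This is the value YM(∇) of the Yang–Mills functional at the compatible connection ∇ = ∇⁰ + H with H_X = H_Y = 0 and H_Z = i·cos(απx/μ)·δ₀, computed from its curvature.) -/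
noncomputable section

/-!
Both squares carry the factor `i² = -1`, so the Yang–Mills value is the integral of
`(c cos kx)² + (π/μ - k sin kx)²` with frequency `k = απ/μ`. Half-angle formulas reduce the squares
to first powers of `sin` and `cos`, and on `[0, 2μ]` the phase `kx` runs from `0` to `2απ`.
-/

section ComplexFrequency

variable {k : ℂ}

theorem integral_sin_mul_complex (hk : k ≠ 0) (a b : ℝ) :
    ∫ x in a..b, Complex.sin (k * x) = Complex.cos (k * a) / k - Complex.cos (k * b) / k := by
  have hderiv : ∀ x ∈ Set.uIcc a b,
      HasDerivAt (fun x : ℝ => -(Complex.cos (k * x) / k)) (Complex.sin (k * x)) x := by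
    intro x _
    have hphase : HasDerivAt (fun z : ℂ => k * z) k x := hasDerivAt_const_mul k
    refine (hphase.ccos.div_const k).neg.comp_ofReal.congr_deriv ?_
    field
  rw [intervalIntegral.integral_eq_sub_of_hasDerivAt hderiv
    (Continuous.intervalIntegrable (by fun_prop) _ _)]
  ring

theorem integral_cos_mul_complex_sq (hk : k ≠ 0) (a b : ℝ) :
    ∫ x in a..b, Complex.cos (k * x) ^ 2 =
      (b - a) / 2 + (Complex.sin (2 * k * b) - Complex.sin (2 * k * a)) / (4 * k) := by
  have half_angle (x : ℝ) : Complex.cos (k * x) ^ 2 = 1 / 2 + Complex.cos (2 * k * x) / 2 := by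
    rw [Complex.cos_sq, mul_assoc]
  simp_rw [half_angle]
  rw [intervalIntegral.integral_add (Continuous.intervalIntegrable (by fun_prop) _ _)
      (Continuous.intervalIntegrable (by fun_prop) _ _),
    intervalIntegral.integral_const, intervalIntegral.integral_div,
    integral_cos_mul_complex (mul_ne_zero two_ne_zero hk), Complex.real_smul]
  push_cast
  field

theorem integral_sin_mul_complex_sq (hk : k ≠ 0) (a b : ℝ) :
    ∫ x in a..b, Complex.sin (k * x) ^ 2 =
      (b - a) / 2 - (Complex.sin (2 * k * b) - Complex.sin (2 * k * a)) / (4 * k) := by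
  simp_rw [Complex.sin_sq]
  rw [intervalIntegral.integral_sub (Continuous.intervalIntegrable (by fun_prop) _ _)
      (Continuous.intervalIntegrable (by fun_prop) _ _),
    intervalIntegral.integral_const, integral_cos_mul_complex_sq hk, Complex.real_smul]
  push_cast
  ring

theorem integral_const_sub_mul_sin_mul_complex_sq (hk : k ≠ 0) (p q : ℂ) (a b : ℝ) :
    ∫ x in a..b, (p - q * Complex.sin (k * x)) ^ 2 =
      p ^ 2 * (b - a) + 2 * p * q * ((Complex.cos (k * b) - Complex.cos (k * a)) / k) +
        q ^ 2 * ((b - a) / 2 - (Complex.sin (2 * k * b) - Complex.sin (2 * k * a)) / (4 * k)) := by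
  have expand (x : ℝ) : (p - q * Complex.sin (k * x)) ^ 2 =
      p ^ 2 - 2 * p * q * Complex.sin (k * x) + q ^ 2 * Complex.sin (k * x) ^ 2 := by ring
  simp_rw [expand]
  rw [intervalIntegral.integral_add (Continuous.intervalIntegrable (by fun_prop) _ _)
      (Continuous.intervalIntegrable (by fun_prop) _ _),
    intervalIntegral.integral_sub (Continuous.intervalIntegrable (by fun_prop) _ _)
      (Continuous.intervalIntegrable (by fun_prop) _ _),
    intervalIntegral.integral_const, intervalIntegral.integral_const_mul,
    intervalIntegral.integral_const_mul, integral_sin_mul_complex hk,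
    integral_sin_mul_complex_sq hk, Complex.real_smul]
  push_cast
  ring

end ComplexFrequency

theorem statement11_general (c α : ℂ) (hα : α ≠ 0) (μ : ℝ) (hμ : μ ≠ 0) :
    -(∫ x in (0 : ℝ)..(2 * μ), ∫ _y in (0 : ℝ)..(1 : ℝ),
        ((Complex.I * c * Complex.cos (α * Real.pi * x / μ)) ^ 2 +
          (Real.pi * Complex.I / μ -
            Complex.I * (α * Real.pi / μ) * Complex.sin (α * Real.pi * x / μ)) ^ 2)) =
      c ^ 2 * μ
        + (c ^ 2 * μ / (4 * α * Real.pi)) * Complex.sin (4 * α * Real.pi)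
        + 2 * Real.pi ^ 2 / μ
        + (2 * Real.pi / μ) * (Complex.cos (2 * α * Real.pi) - 1)
        + α ^ 2 * Real.pi ^ 2 / μ
        - (α * Real.pi / (4 * μ)) * Complex.sin (4 * α * Real.pi) := by
  have hμ' : (μ : ℂ) ≠ 0 := Complex.ofReal_ne_zero.mpr hμ
  have hπ : (Real.pi : ℂ) ≠ 0 := Complex.ofReal_ne_zero.mpr Real.pi_ne_zero
  set k : ℂ := α * Real.pi / μ with hk_def
  have hk : k ≠ 0 := div_ne_zero (mul_ne_zero hα hπ) hμ'
  have integrand_eq (x : ℝ) :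
      -((Complex.I * c * Complex.cos (α * Real.pi * x / μ)) ^ 2 +
          (Real.pi * Complex.I / μ - Complex.I * k * Complex.sin (α * Real.pi * x / μ)) ^ 2) =
        c ^ 2 * Complex.cos (k * x) ^ 2 + (Real.pi / μ - k * Complex.sin (k * x)) ^ 2 := by
    rw [show α * Real.pi * x / μ = k * x by ring]
    linear_combination (-(c ^ 2 * Complex.cos (k * x) ^ 2 +
      (Real.pi / μ - k * Complex.sin (k * x)) ^ 2)) * Complex.I_sq
  have phase_end : k * (2 * μ) = 2 * α * Real.pi := by rw [hk_def]; field
  have double_phase_end : 2 * k * (2 * μ) = 4 * α * Real.pi := by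
    linear_combination 2 * phase_end
  rw [← intervalIntegral.integral_neg]
  simp_rw [intervalIntegral.integral_const, sub_zero, one_smul, integrand_eq]
  rw [intervalIntegral.integral_add (Continuous.intervalIntegrable (by fun_prop) _ _)
      (Continuous.intervalIntegrable (by fun_prop) _ _),
    intervalIntegral.integral_const_mul, integral_cos_mul_complex_sq hk,
    integral_const_sub_mul_sin_mul_complex_sq hk]
  push_cast
  rw [phase_end, double_phase_end]
  simp only [mul_zero, Complex.sin_zero, Complex.cos_zero, sub_zero, hk_def]
  field

/-- Theorem `thm:min-but-nc`(b), value formula: for a positive integer `c`,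
`μ > 0`, and `α ≠ 0`,
`−∫₀^{2μ}∫₀^1 [(i·c·cos(απx/μ))² + (πi/μ − i·(απ/μ)·sin(απx/μ))²] dy dx
  = c²μ + (c²μ/(4απ))·sin(4απ) + 2π²/μ + (2π/μ)·(cos(2απ) − 1) + α²π²/μ − (απ/(4μ))·sin(4απ)`,
the Yang–Mills value of the `Z`-perturbed connection `∇ = ∇⁰ + H`, `H_Z = i·cos(απx/μ)·δ₀`. -/
theorem statement11 (c : ℕ) (hc : 0 < c) (μ : ℝ) (hμ : 0 < μ) (α : ℝ) (hα : α ≠ 0) :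
    -(∫ x in (0 : ℝ)..(2 * μ), ∫ _y in (0 : ℝ)..(1 : ℝ),
        ((Complex.I * (c : ℂ) * (Real.cos (α * Real.pi * x / μ) : ℂ)) ^ 2 +
          ((Real.pi : ℂ) * Complex.I / (μ : ℂ) -
            Complex.I * ((α * Real.pi / μ : ℝ) : ℂ) *
              (Real.sin (α * Real.pi * x / μ) : ℂ)) ^ 2)) =
      (((c : ℝ) ^ 2 * μ
        + ((c : ℝ) ^ 2 * μ / (4 * α * Real.pi)) * Real.sin (4 * α * Real.pi)
        + 2 * Real.pi ^ 2 / μ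
        + (2 * Real.pi / μ) * (Real.cos (2 * α * Real.pi) - 1)
        + α ^ 2 * Real.pi ^ 2 / μ
        - (α * Real.pi / (4 * μ)) * Real.sin (4 * α * Real.pi) : ℝ) : ℂ) := by
  exact_mod_cast statement11_general c α (mod_cast hα) μ hμ.ne'

end
end

section
/- The module Ξ is isomorphic to QD as a bimodule (Lemma 'lem:1'): in the imprimitivity setting below, set Q = ⟨R,R⟩_R ∈ D and define F : Ξ → D by F(ξ) = ⟨R, ξ⟩_R. Then: (i) Q* = Q and Q·F(ξ) = F(ξ) for every ξ ∈ Ξ (so F maps into QD = {d ∈ D : Q·d = d}); (ii) R·F(ξ) = ξ for every ξ ∈ Ξ; (iii) F(R·d) = d for every d ∈ D with Q·d = d; (iv) F(ξ·Φ) = F(ξ)·Φ for all ξ ∈ Ξ, Φ ∈ D; (v) F(ξ)*·F(η) = ⟨ξ, η⟩_R for all ξ, η ∈ Ξ; (vi) setting φ(a) = ⟨R, a·R⟩_R for a ∈ E, one has F(a·ξ) = φ(a)·F(ξ) for all a ∈ E, ξ ∈ Ξ. Consequently F is a bijection from Ξ onto QD intertwining the module structures. -/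
/-- `R` is a one-element Parseval frame of a module with right action `aR` and `D`-valued inner
product `ipR`: every `ξ` is reconstructed as `R · ⟨R, ξ⟩`. The action and the inner product
are encoded as plain functions rather than through type classes. -/
def IsParsevalVector {D Ξ : Type*} (aR : Ξ → D → Ξ) (ipR : Ξ → Ξ → D) (R : Ξ) : Prop :=
  ∀ ξ : Ξ, aR R (ipR R ξ) = ξ

namespace IsParsevalVector

theorem of_imprimitivity {D E Ξ : Type*} {aL : E → Ξ → Ξ} {aR : Ξ → D → Ξ} {ipR : Ξ → Ξ → D}
    {ipL : Ξ → Ξ → E} {R : Ξ} (himp : ∀ ζ : Ξ, aL (ipL R R) ζ = aR R (ipR R ζ))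
    (hR : ∀ ξ : Ξ, aL (ipL R R) ξ = ξ) : IsParsevalVector aR ipR R :=
  fun ξ => (himp ξ).symm.trans (hR ξ)

variable {D Ξ : Type*} [Mul D] {aR : Ξ → D → Ξ} {ipR : Ξ → Ξ → D} {R : Ξ}

theorem inner_map_eq_mul (h : IsParsevalVector aR ipR R)
    (hipR_act : ∀ (ξ η : Ξ) (d : D), ipR ξ (aR η d) = ipR ξ η * d)
    {T : Ξ → Ξ} (hT : ∀ (ξ : Ξ) (d : D), aR (T ξ) d = T (aR ξ d)) (η ξ : Ξ) :
    ipR η (T ξ) = ipR η (T R) * ipR R ξ :=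
  calc ipR η (T ξ) = ipR η (T (aR R (ipR R ξ))) := by rw [h ξ]
    _ = ipR η (aR (T R) (ipR R ξ)) := by rw [hT]
    _ = ipR η (T R) * ipR R ξ := hipR_act η (T R) _

theorem inner_mul_inner (h : IsParsevalVector aR ipR R)
    (hipR_act : ∀ (ξ η : Ξ) (d : D), ipR ξ (aR η d) = ipR ξ η * d) (η ξ : Ξ) :
    ipR η R * ipR R ξ = ipR η ξ :=
  (h.inner_map_eq_mul hipR_act (T := id) (fun _ _ => rfl) η ξ).symm

theorem bijOn_inner (h : IsParsevalVector aR ipR R)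
    (hipR_act : ∀ (ξ η : Ξ) (d : D), ipR ξ (aR η d) = ipR ξ η * d) :
    Set.BijOn (ipR R) Set.univ {d : D | ipR R R * d = d} := by
  have hinv : Set.InvOn (aR R) (ipR R) Set.univ {d : D | ipR R R * d = d} :=
    ⟨fun ξ _ => h ξ, fun d hd => (hipR_act R R d).trans hd⟩
  exact hinv.bijOn (fun ξ _ => h.inner_mul_inner hipR_act R ξ) (Set.mapsTo_univ _ _)

end IsParsevalVector

theorem statement17_general {D E Ξ : Type*} [Mul D] [Star D]
    (aL : E → Ξ → Ξ) (aR : Ξ → D → Ξ) (ipR : Ξ → Ξ → D) (ipL : Ξ → Ξ → E)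
    (hcomm : ∀ (a : E) (ξ : Ξ) (d : D), aR (aL a ξ) d = aL a (aR ξ d))
    (hipR_act : ∀ (ξ η : Ξ) (d : D), ipR ξ (aR η d) = ipR ξ η * d)
    (hipR_star : ∀ ξ η : Ξ, star (ipR ξ η) = ipR η ξ)
    (himp : ∀ ξ η ζ : Ξ, aL (ipL ξ η) ζ = aR ξ (ipR η ζ))
    (R : Ξ) (hR : ∀ ξ : Ξ, aL (ipL R R) ξ = ξ) :
    (star (ipR R R) = ipR R R ∧ ∀ ξ : Ξ, ipR R R * ipR R ξ = ipR R ξ) ∧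
    (∀ ξ : Ξ, aR R (ipR R ξ) = ξ) ∧
    (∀ d : D, ipR R R * d = d → ipR R (aR R d) = d) ∧
    (∀ (ξ : Ξ) (Φ : D), ipR R (aR ξ Φ) = ipR R ξ * Φ) ∧
    (∀ ξ η : Ξ, star (ipR R ξ) * ipR R η = ipR ξ η) ∧
    (∀ (a : E) (ξ : Ξ), ipR R (aL a ξ) = ipR R (aL a R) * ipR R ξ) ∧
    Set.BijOn (fun ξ : Ξ => ipR R ξ) Set.univ {d : D | ipR R R * d = d} := by
  have hframe : IsParsevalVector aR ipR R := .of_imprimitivity (himp R R) hR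
  have inner_mul_inner := hframe.inner_mul_inner hipR_act
  refine ⟨⟨hipR_star R R, inner_mul_inner R⟩, hframe, ?_, hipR_act R, ?_, ?_,
    hframe.bijOn_inner hipR_act⟩
  · exact fun d hd => (hipR_act R R d).trans hd
  · exact fun ξ η => by rw [hipR_star, inner_mul_inner]
  · exact fun a => hframe.inner_map_eq_mul hipR_act (hcomm a) R

/-- Lemma `lem:1`, `Ξ ≅ QD` as bimodules: in the imprimitivity setting, with
`Q = ⟨R,R⟩_R` and `F(ξ) = ⟨R,ξ⟩_R`, the claims (i)–(vi) hold and `F` is a bijection from `Ξ`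
onto `QD = {d : Q·d = d}` intertwining the module structures. -/
theorem statement17
    {D E Ξ : Type*}
    [Ring D] [Algebra ℂ D] [StarRing D] [StarModule ℂ D]
    [Ring E] [Algebra ℂ E] [StarRing E] [StarModule ℂ E]
    [AddCommGroup Ξ] [Module ℂ Ξ]
    -- the left `E`-action, the right `D`-action, and the two inner products on `Ξ`
    (aL : E → Ξ → Ξ) (aR : Ξ → D → Ξ) (ipR : Ξ → Ξ → D) (ipL : Ξ → Ξ → E)
    -- `Ξ` is a left `E`-module
    (haL_add : ∀ (a : E) (ξ η : Ξ), aL a (ξ + η) = aL a ξ + aL a η)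
    (haL_add' : ∀ (a b : E) (ξ : Ξ), aL (a + b) ξ = aL a ξ + aL b ξ)
    (haL_mul : ∀ (a b : E) (ξ : Ξ), aL (a * b) ξ = aL a (aL b ξ))
    -- `Ξ` is a right `D`-module
    (haR_add : ∀ (ξ η : Ξ) (d : D), aR (ξ + η) d = aR ξ d + aR η d)
    (haR_add' : ∀ (ξ : Ξ) (d₁ d₂ : D), aR ξ (d₁ + d₂) = aR ξ d₁ + aR ξ d₂)
    (haR_mul : ∀ (ξ : Ξ) (d₁ d₂ : D), aR ξ (d₁ * d₂) = aR (aR ξ d₁) d₂)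
    -- the actions commute
    (hcomm : ∀ (a : E) (ξ : Ξ) (d : D), aR (aL a ξ) d = aL a (aR ξ d))
    -- `⟨ξ, η·d⟩_R = ⟨ξ,η⟩_R·d` and `(⟨ξ,η⟩_R)* = ⟨η,ξ⟩_R`
    (hipR_act : ∀ (ξ η : Ξ) (d : D), ipR ξ (aR η d) = ipR ξ η * d)
    (hipR_star : ∀ ξ η : Ξ, star (ipR ξ η) = ipR η ξ)
    -- the imprimitivity relation `⟨ξ,η⟩_L·ζ = ξ·⟨η,ζ⟩_R`
    (himp : ∀ ξ η ζ : Ξ, aL (ipL ξ η) ζ = aR ξ (ipR η ζ))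
    -- `R ∈ Ξ` with `⟨R,R⟩_L·ξ = ξ`
    (R : Ξ) (hR : ∀ ξ : Ξ, aL (ipL R R) ξ = ξ)
    :
    -- (i) `Q* = Q` and `Q·F(ξ) = F(ξ)`
    (star (ipR R R) = ipR R R ∧ ∀ ξ : Ξ, ipR R R * ipR R ξ = ipR R ξ) ∧
    -- (ii) `R·F(ξ) = ξ`
    (∀ ξ : Ξ, aR R (ipR R ξ) = ξ) ∧
    -- (iii) `F(R·d) = d` for `d ∈ QD`
    (∀ d : D, ipR R R * d = d → ipR R (aR R d) = d) ∧
    -- (iv) `F(ξ·Φ) = F(ξ)·Φ`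
    (∀ (ξ : Ξ) (Φ : D), ipR R (aR ξ Φ) = ipR R ξ * Φ) ∧
    -- (v) `F(ξ)*·F(η) = ⟨ξ,η⟩_R`
    (∀ ξ η : Ξ, star (ipR R ξ) * ipR R η = ipR ξ η) ∧
    -- (vi) `F(a·ξ) = φ(a)·F(ξ)` with `φ(a) = ⟨R, a·R⟩_R`
    (∀ (a : E) (ξ : Ξ), ipR R (aL a ξ) = ipR R (aL a R) * ipR R ξ) ∧
    -- consequently `F` is a bijection from `Ξ` onto `QD`
    Set.BijOn (fun ξ : Ξ => ipR R ξ) Set.univ {d : D | ipR R R * d = d} :=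
  statement17_general aL aR ipR ipL hcomm hipR_act hipR_star himp R hR
end
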